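/- arXiv:gr-qc/9709038 — 2 statements merged into one kernel-verified Lean document; each statement's English description precedes it below -/
import Mathlib

section
/- Let T be any triangle in the plane with a designated refinement edge, and bisect repeatedly by opposite-edge (newest-vertex) bisection. Then T together with all of its descendants belong to at most four distinct similarity classes; moreover the descendants of each fixed generation belong to at most two similarity classes. -/
/-!
Up to translation, a marked triangle is determined by half its refinement edge `P` and the median
`Q` to that edge: its vertices are `c + P`, `c - P`, `c + Q`. Reversing the sign of `P` swaps two
vertices, and the point reflection in `c` reverses both signs, so the similarity class depends only
on `P` and `Q` up to independent signs and a common scale. In these terms a bisection sends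
`(P, Q)` to `(P - Q, P + Q)` or to `(P + Q, P - Q)`, up to signs and scale
(`HasShape.triChild1`, `HasShape.triChild2`). Doing it twice gives `(P, Q)` or `(Q, P)`. Hence
the even generations only show the shapes `(P, Q)`, `(Q, P)` and the odd ones only
`(P - Q, P + Q)`, `(P + Q, P - Q)`. All the similarities involved are homotheties, possibly of
negative ratio.
-/

noncomputable section

/-- A marked triangle in the plane: an ordered triple of points of `ℝ²`, with the convention that
the refinement edge is the edge joining vertices `0` and `1` (the edge opposite vertex `2`). -/
abbrev MarkedTriangle := Fin 3 → EuclideanSpace ℝ (Fin 2)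

/-- First child of opposite-edge (newest-vertex) bisection: join the midpoint `z` of the
refinement edge to the opposite vertex.  The child containing vertex `0` has vertices
`(t 0, t 2, z)`; its refinement edge, opposite the new vertex `z`, is the edge joining its
vertices `0` and `1` as required by our convention. -/
def triChild1 (t : MarkedTriangle) : MarkedTriangle :=
  ![t 0, t 2, midpoint ℝ (t 0) (t 1)]

/-- Second child of opposite-edge (newest-vertex) bisection, with vertices `(t 1, t 2, z)`. -/
def triChild2 (t : MarkedTriangle) : MarkedTriangle :=
  ![t 1, t 2, midpoint ℝ (t 0) (t 1)]

/-- The descendants of generation `g` of a marked triangle: the marked triangles obtained from it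
by `g` successive opposite-edge bisections. -/
def triDescendants (t : MarkedTriangle) : ℕ → Set MarkedTriangle
  | 0 => {t}
  | g + 1 => ⋃ u ∈ triDescendants t g, ({triChild1 u, triChild2 u} : Set MarkedTriangle)

/-- A similarity transformation of the plane: a bijection multiplying all distances by a fixed
positive constant. -/
def IsSimilarityMap (f : EuclideanSpace ℝ (Fin 2) → EuclideanSpace ℝ (Fin 2)) : Prop :=
  Function.Bijective f ∧ ∃ r : ℝ, 0 < r ∧ ∀ x y, dist (f x) (f y) = r * dist x y

/-- Two triangles are similar if some similarity transformation of the plane maps the vertex set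
of one onto the vertex set of the other. -/
def SimilarTriangle (s t : MarkedTriangle) : Prop :=
  ∃ f, IsSimilarityMap f ∧ f '' Set.range s = Set.range t

/-- The refinement edge of `u` has half-length vector `P` and the median to it is `Q`, up to
independent signs and a common nonzero factor; `c` is the midpoint of the refinement edge. -/
def HasShape (u : MarkedTriangle) (P Q : EuclideanSpace ℝ (Fin 2)) : Prop :=
  ∃ (c : EuclideanSpace ℝ (Fin 2)) (a b : ℝ), b ≠ 0 ∧ (a = b ∨ a = -b) ∧
    u 0 = c + a • P ∧ u 1 = c - a • P ∧ u 2 = c + b • Q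

/-- `u` has the shape `(P, Q)` or the shape `(Q, P)`. -/
def HasShapePair (u : MarkedTriangle) (P Q : EuclideanSpace ℝ (Fin 2)) : Prop :=
  HasShape u P Q ∨ HasShape u Q P

/-- The representative of the shape `(P, Q)` whose refinement edge is centred at the origin. -/
def shapeRep (P Q : EuclideanSpace ℝ (Fin 2)) : MarkedTriangle := ![P, -P, Q]

lemma isSimilarityMap_homothety (c : EuclideanSpace ℝ (Fin 2)) {b : ℝ} (hb : b ≠ 0) :
    IsSimilarityMap fun x => c + b • x := by
  refine ⟨⟨fun x y h => ?_, fun y => ⟨b⁻¹ • (y - c), ?_⟩⟩, |b|, abs_pos.2 hb, fun x y => ?_⟩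
  · exact smul_right_injective _ hb (add_left_cancel h)
  · simp [smul_smul, hb]
  · simp [dist_smul₀]

lemma range_markedTriangle (u : MarkedTriangle) : Set.range u = {u 0, u 1, u 2} := by
  ext x
  simp [Fin.exists_fin_succ, eq_comm]

lemma HasShape.similar {u : MarkedTriangle} {P Q : EuclideanSpace ℝ (Fin 2)}
    (h : HasShape u P Q) : SimilarTriangle (shapeRep P Q) u := by
  obtain ⟨c, a, b, hb, hab, h0, h1, h2⟩ := h
  refine ⟨fun x => c + b • x, isSimilarityMap_homothety c hb, ?_⟩
  rw [range_markedTriangle, range_markedTriangle, h0, h1, h2]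
  rcases hab with rfl | rfl
  · simp [shapeRep, Set.image_insert_eq, sub_eq_add_neg]
  · simp [shapeRep, Set.image_insert_eq, sub_eq_add_neg, Set.insert_comm]

/-- Bisection acts by `(P, Q) ↦ (P - Q, P + Q)` or `(P + Q, P - Q)`, according to the relative
sign of the two factors in `HasShape`. -/
lemma HasShape.triChild1 {u : MarkedTriangle} {P Q : EuclideanSpace ℝ (Fin 2)}
    (h : HasShape u P Q) : HasShapePair (triChild1 u) (P - Q) (P + Q) := by
  obtain ⟨c, a, b, hb, hab, h0, h1, h2⟩ := h
  have hb2 : -(b / 2) ≠ 0 := by simpa using hb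
  have hb3 : b / 2 ≠ 0 := by simpa using hb
  rcases hab with rfl | rfl
  · refine Or.inl ⟨c + (a / 2) • (P + Q), a / 2, -(a / 2), hb2, by simp, ?_, ?_, ?_⟩ <;>
      simp [_root_.triChild1, h0, h1, h2, midpoint_eq_smul_add] <;> module
  · refine Or.inr ⟨c - (b / 2) • (P - Q), -(b / 2), b / 2, hb3, by simp, ?_, ?_, ?_⟩ <;>
      simp [_root_.triChild1, h0, h1, h2, midpoint_eq_smul_add] <;> module

/-- The second child is the first child of the triangle with its refinement edge reversed. -/
lemma HasShape.triChild2 {u : MarkedTriangle} {P Q : EuclideanSpace ℝ (Fin 2)}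
    (h : HasShape u P Q) : HasShapePair (triChild2 u) (P - Q) (P + Q) := by
  obtain ⟨c, a, b, hb, hab, h0, h1, h2⟩ := h
  have hswap : HasShape ![u 1, u 0, u 2] P Q :=
    ⟨c, -a, b, hb, by rcases hab with rfl | rfl <;> simp, by simp [h1, sub_eq_add_neg],
      by simp [h0], by simp [h2]⟩
  have := hswap.triChild1
  simpa [_root_.triChild1, _root_.triChild2, midpoint_comm] using this

/-- Shapes are insensitive to independent signs and a common scale. -/
lemma HasShape.of_smul {u : MarkedTriangle} {P Q : EuclideanSpace ℝ (Fin 2)} {r s : ℝ}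
    (hs : s ≠ 0) (hrs : r = s ∨ r = -s) (h : HasShape u (r • P) (s • Q)) : HasShape u P Q := by
  obtain ⟨c, a, b, hb, hab, h0, h1, h2⟩ := h
  refine ⟨c, a * r, b * s, mul_ne_zero hb hs, ?_, by simpa [mul_smul] using h0,
    by simpa [mul_smul] using h1, by simpa [mul_smul] using h2⟩
  rcases hab with rfl | rfl <;> rcases hrs with rfl | rfl <;> simp

lemma HasShapePair.of_smul {u : MarkedTriangle} {P Q : EuclideanSpace ℝ (Fin 2)} {r s : ℝ}
    (hs : s ≠ 0) (hrs : r = s ∨ r = -s) (h : HasShapePair u (r • P) (s • Q)) :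
    HasShapePair u P Q := by
  rcases h with h | h
  · exact Or.inl (h.of_smul hs hrs)
  · refine Or.inr (h.of_smul ?_ ?_)
    · rcases hrs with rfl | rfl <;> simpa using hs
    · rcases hrs with rfl | rfl <;> simp

lemma HasShapePair.child {u v : MarkedTriangle} {P Q : EuclideanSpace ℝ (Fin 2)}
    (h : HasShapePair u P Q) (hv : v = triChild1 u ∨ v = triChild2 u) :
    HasShapePair v (P - Q) (P + Q) := by
  have key : ∀ {P Q}, HasShape u P Q → HasShapePair v (P - Q) (P + Q) := by
    intro P Q h
    rcases hv with rfl | rfl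
    exacts [h.triChild1, h.triChild2]
  rcases h with h | h
  · exact key h
  -- Swapping `P` and `Q` only changes the sign of `P - Q`.
  · refine HasShapePair.of_smul (r := -1) (s := 1) one_ne_zero (Or.inr rfl) ?_
    convert key h using 1 <;> module

lemma HasShapePair.child_of_sub_add {u v : MarkedTriangle} {P Q : EuclideanSpace ℝ (Fin 2)}
    (h : HasShapePair u (P - Q) (P + Q)) (hv : v = triChild1 u ∨ v = triChild2 u) :
    HasShapePair v P Q := by
  -- The new shape is `(-2Q, 2P)`.
  have h' : HasShapePair v ((2 : ℝ) • P) ((-2 : ℝ) • Q) := by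
    have hc : HasShapePair v ((-2 : ℝ) • Q) ((2 : ℝ) • P) := by
      convert h.child hv using 1 <;> module
    exact hc.symm
  exact h'.of_smul (by norm_num) (by norm_num)

/-- The shapes occurring in generation `g` depend only on the parity of `g`. -/
lemma hasShapePair_of_mem_triDescendants {t : MarkedTriangle} {P Q : EuclideanSpace ℝ (Fin 2)}
    (ht : HasShape t P Q) (g : ℕ) : ∀ u ∈ triDescendants t g,
      if Even g then HasShapePair u P Q else HasShapePair u (P - Q) (P + Q) := by
  induction g with
  | zero => simpa [triDescendants, HasShapePair] using Or.inl ht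
  | succ g ih =>
    intro v hv
    obtain ⟨u, hu, hv⟩ : ∃ u ∈ triDescendants t g, v = triChild1 u ∨ v = triChild2 u := by
      simpa [triDescendants] using hv
    have hu' := ih u hu
    by_cases hg : Even g
    · rw [if_pos hg] at hu'
      rw [if_neg (by simpa [Nat.even_add_one] using hg)]
      exact hu'.child hv
    · rw [if_neg hg] at hu'
      rw [if_pos (by simpa [Nat.even_add_one] using hg)]
      exact hu'.child_of_sub_add hv

/-- For any nondegenerate marked triangle `T`, under repeated opposite-edge
(newest-vertex) bisection, `T` together with all of its descendants belong to at most four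
distinct similarity classes; moreover the descendants of each fixed generation belong to at most
two similarity classes. -/
theorem newest_vertex_bisection_similarity_classes (t : MarkedTriangle)
    (hindep : AffineIndependent ℝ t) :
    (∃ reps : Finset MarkedTriangle, reps.card ≤ 4 ∧
      ∀ g : ℕ, ∀ u ∈ triDescendants t g, ∃ r ∈ reps, SimilarTriangle r u) ∧
    (∀ g : ℕ, ∃ reps : Finset MarkedTriangle, reps.card ≤ 2 ∧
      ∀ u ∈ triDescendants t g, ∃ r ∈ reps, SimilarTriangle r u) := by
    classical
  obtain ⟨P, Q, ht⟩ : ∃ P Q, HasShape t P Q := by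
    refine ⟨(1 / 2 : ℝ) • (t 0 - t 1), t 2 - (1 / 2 : ℝ) • (t 0 + t 1),
      (1 / 2 : ℝ) • (t 0 + t 1), 1, 1, one_ne_zero, Or.inl rfl, ?_, ?_, ?_⟩ <;> module
  have hmem := hasShapePair_of_mem_triDescendants ht
  have hpair : ∀ {u P Q}, HasShapePair u P Q →
      ∃ r ∈ ({shapeRep P Q, shapeRep Q P} : Finset MarkedTriangle), SimilarTriangle r u := by
    rintro u P Q (h | h)
    · exact ⟨_, by simp, h.similar⟩
    · exact ⟨_, by simp, h.similar⟩
  refine ⟨⟨{shapeRep P Q, shapeRep Q P} ∪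
    {shapeRep (P - Q) (P + Q), shapeRep (P + Q) (P - Q)}, ?_, fun g u hu => ?_⟩, fun g => ?_⟩
  · exact (Finset.card_union_le _ _).trans (add_le_add Finset.card_le_two Finset.card_le_two)
  · have h := hmem g u hu
    split_ifs at h
    · obtain ⟨r, hr, hs⟩ := hpair h
      exact ⟨r, Finset.mem_union_left _ hr, hs⟩
    · obtain ⟨r, hr, hs⟩ := hpair h
      exact ⟨r, Finset.mem_union_right _ hr, hs⟩
  · by_cases hg : Even g
    · exact ⟨_, Finset.card_le_two, fun u hu => hpair (by simpa [hg] using hmem g u hu)⟩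
    · exact ⟨_, Finset.card_le_two, fun u hu => hpair (by simpa [hg] using hmem g u hu)⟩
end
end

section
/- Let T₀ be a conformingly-marked tetrahedral mesh in which no tetrahedron is flagged, and for k = 0, 1, 2, …, let S_k ⊆ T_k be arbitrary and set T_{k+1} = LocalRefine(T_k, S_k). Then for each k the recursion RefineToConformity applied within LocalRefine terminates after finitely many rounds, and the resulting mesh T_{k+1} is a conformingly-marked (in particular, conforming) mesh. -/
/-!
Termination and conformity both rest on an organisation of the faces of a mesh into a forest of
cells.

**Laminarity.** A triangle with its marked edge, or an edge (marked by itself), is a *node*. Halving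
a node at its marked edge splits its open simplex into two halves and a separating cell; a
triangular half is marked opposite its newest vertex (`Split`). A mesh is `Laminar` when any two
nodes of its tetrahedra whose open simplices meet are comparable, i.e. one arises from the other by
repeated halving. A conformingly-marked mesh is laminar because two of its faces whose open
simplices meet coincide, marks included. Bisecting any set of tetrahedra preserves laminarity
(`Laminar.bisect`): a face of a child is a face of its parent, or a half or a separating cell of one,
or the new face, which is interior to the parent and carries the same mark in both children.
In a laminar mesh without hanging nodes, comparable cells have their vertices in common, so the
mesh is conformingly marked (`Laminar.conforminglyMarked`).

**Uniform refinement.** Let `τ` be unflagged. After one bisection the marks avoid the new vertex, so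
the children are planar, and the three refinement edges met along a line of three successive
bisections all join vertices of `τ` (`exists_quad_child`). Each bisection removes one vertex of `τ`,
so at most one is left in a great-grandchild; hence the vertices of a great-grandchild are exactly
the vertices and edge midpoints of `τ` lying in it (`three_steps`), and it is again unflagged
(`flag_three`). Therefore bisecting every tetrahedron three times turns an unflagged laminar mesh
without hanging nodes into another such mesh (`Good.three`), and the uniform refinements of `T 0`
at depths `3 * K` have no hanging nodes.

**Termination.** Every mesh obtained consists of tetrahedra occurring in the uniform refinements of
depth at most some `3 * K` (`Bdd`). As vertices persist under uniform refinement, a tetrahedron of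
depth exactly `3 * K` has no hanging node, so restoring conformity never goes deeper (`Bdd.step`).
It thus stops, by the potential `pot`, in which a tetrahedron of generation `g` weighs `3 ^ (G - g)`
and bisection replaces this weight by at most two thirds of it.
-/

noncomputable section
open scoped Classical

/-- Points of `ℝ³`. -/
abbrev Pt3 := EuclideanSpace ℝ (Fin 3)

/-- A marked tetrahedron: a vertex set `V` (a 4-element finset), a refinement edge `ref`
(a 2-element subset of `V`), an assignment `mark` of a marked edge to each face (3-element subset
of `V`), a boolean flag, and a generation number. -/
structure MTet where
  V : Finset Pt3
  ref : Finset Pt3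
  mark : Finset Pt3 → Finset Pt3
  flag : Bool
  gen : ℕ

/-- The closed tetrahedron itself: the convex hull of the vertices. -/
def MTet.body (τ : MTet) : Set Pt3 := convexHull ℝ (τ.V : Set Pt3)

/-- A valid marked tetrahedron: 4 affinely independent vertices, the refinement edge is an edge,
each face is assigned one of its edges as marked edge, and every face containing the refinement
edge has the refinement edge as its marked edge. -/
def MTet.Valid (τ : MTet) : Prop :=
  τ.V.card = 4 ∧ AffineIndependent ℝ (fun p : (τ.V : Set Pt3) => (p : Pt3)) ∧
  τ.ref ⊆ τ.V ∧ τ.ref.card = 2 ∧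
  ∀ F : Finset Pt3, F ⊆ τ.V → F.card = 3 →
    τ.mark F ⊆ F ∧ (τ.mark F).card = 2 ∧ (τ.ref ⊆ F → τ.mark F = τ.ref)

/-- A marked tetrahedron is planar if its four marked edges are coplanar. -/
def MTet.Planar (τ : MTet) : Prop :=
  Coplanar ℝ (⋃ F ∈ {F : Finset Pt3 | F ⊆ τ.V ∧ F.card = 3}, (τ.mark F : Set Pt3))

/-- The child of the marked tetrahedron `τ` corresponding to the endpoint `c` of the refinement
edge, produced by the algorithm `BisectTet`.  The new vertex `z` is the midpoint (centroid) of
the refinement edge; the child's vertices are `z`, `c`, and the two vertices of `τ` not on the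
refinement edge.  The child's refinement edge is the marked edge carried in `τ` by the inherited
face, which keeps its marked edge; each cut face is marked with its edge opposite `z`; the new
face is marked, in the planar-and-flagged case, with the edge joining `z` to the endpoint of the
child's refinement edge lying in the new face, and otherwise with its edge opposite `z`.  The
child is flagged iff `τ` is planar and unflagged, and its generation is one more than `τ`'s. -/
def MTet.child (τ : MTet) (c : Pt3) : MTet :=
  let z : Pt3 := τ.ref.centroid ℝ id
  let opp : Finset Pt3 := τ.V \ τ.ref
  let inh : Finset Pt3 := insert c opp
  let newF : Finset Pt3 := insert z opp
  { V := insert z (insert c opp)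
    ref := τ.mark inh
    mark := fun G =>
      if G = inh then τ.mark inh
      else if G = newF then
        if τ.Planar ∧ τ.flag = true then insert z (τ.mark inh ∩ opp) else opp
      else G.erase z
    flag := if τ.Planar ∧ τ.flag = false then true else false
    gen := τ.gen + 1 }

/-- `BisectTets T S`: replace each marked tetrahedron of `S` by its two children. -/
def bisectTets (T S : Set MTet) : Set MTet :=
  (T \ S) ∪ ⋃ τ ∈ S, {σ : MTet | ∃ c ∈ τ.ref, σ = τ.child c}

/-- `τ` has a hanging node in the mesh `T`: some vertex of a tetrahedron of `T` belongs to `τ`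
but is not a vertex of `τ`. -/
def HasHangingNode (T : Set MTet) (τ : MTet) : Prop :=
  ∃ σ ∈ T, ∃ ν ∈ σ.V, ν ∈ τ.body ∧ ν ∉ τ.V

/-- A mesh has no hanging nodes. -/
def NoHanging (T : Set MTet) : Prop := ∀ τ ∈ T, ¬ HasHangingNode T τ

/-- One round of `RefineToConformity`: bisect all tetrahedra having a hanging node.
(If there are none, the mesh is unchanged.) -/
def conformStep (T : Set MTet) : Set MTet :=
  bisectTets T {τ ∈ T | HasHangingNode T τ}

/-- `RefineToConformity`: repeatedly bisect all tetrahedra having a hanging node, recursing until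
no tetrahedron has a hanging node.  If the recursion terminates, the result is the first iterate
with no hanging nodes (equivalently, any sufficiently late iterate, since a mesh without hanging
nodes is a fixed point); if it does not terminate the value is junk (the input). -/
def refineToConformity (T : Set MTet) : Set MTet :=
  if h : ∃ N, NoHanging (conformStep^[N] T) then conformStep^[Nat.find h] T else T

/-- `LocalRefine T S = RefineToConformity (BisectTets T S)`. -/
def localRefine (T S : Set MTet) : Set MTet := refineToConformity (bisectTets T S)

/-- A (marked) mesh: a finite set of valid marked tetrahedra with pairwise disjoint interiors. -/
def IsMesh (T : Set MTet) : Prop :=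
  T.Finite ∧ (∀ τ ∈ T, τ.Valid) ∧
  ∀ τ ∈ T, ∀ σ ∈ T, τ ≠ σ → interior τ.body ∩ interior σ.body = ∅

/-- A mesh is conforming if the intersection of any two distinct tetrahedra in it is either
empty, a common vertex, a common edge, or a common face. -/
def Conforming (T : Set MTet) : Prop :=
  ∀ τ ∈ T, ∀ σ ∈ T, τ ≠ σ →
    τ.body ∩ σ.body = ∅ ∨
    (∃ v : Pt3, v ∈ τ.V ∧ v ∈ σ.V ∧ τ.body ∩ σ.body = {v}) ∨
    (∃ e : Finset Pt3, e.card = 2 ∧ e ⊆ τ.V ∧ e ⊆ σ.V ∧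
      τ.body ∩ σ.body = convexHull ℝ (e : Set Pt3)) ∨
    (∃ f : Finset Pt3, f.card = 3 ∧ f ⊆ τ.V ∧ f ⊆ σ.V ∧
      τ.body ∩ σ.body = convexHull ℝ (f : Set Pt3))

/-- A conformingly-marked mesh: a conforming marked mesh in which any face shared by two
tetrahedra is assigned the same marked edge by both. -/
def ConforminglyMarked (T : Set MTet) : Prop :=
  IsMesh T ∧ Conforming T ∧
  ∀ τ ∈ T, ∀ σ ∈ T, ∀ F : Finset Pt3, F.card = 3 → F ⊆ τ.V → F ⊆ σ.V → τ.mark F = σ.mark F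

namespace TetBisect

/-! ### Barycentric weights -/

/-- Homogeneous coordinates of a point of `ℝ³`; they turn affine combinations into linear ones. -/
def hmg (v : Pt3) : ℝ × Pt3 := (1, v)

/-- Affine independence of a finite point set, phrased through homogeneous coordinates. -/
def AI (F : Finset Pt3) : Prop :=
  ∀ w : Pt3 → ℝ, ∑ v ∈ F, w v • hmg v = 0 → ∀ v ∈ F, w v = 0

/-- `w` is a system of (signed) barycentric weights of `x` with respect to `F`. -/
def Bary (F : Finset Pt3) (w : Pt3 → ℝ) (x : Pt3) : Prop := ∑ v ∈ F, w v • hmg v = hmg x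

/-- The open simplex spanned by `F`: the points with positive barycentric weights. -/
def oh (F : Finset Pt3) : Set Pt3 := {x | ∃ w, Bary F w x ∧ ∀ v ∈ F, 0 < w v}

/-- The midpoint of a segment. -/
def mid (p q : Pt3) : Pt3 := (1 / 2 : ℝ) • (p + q)

lemma mid_comm (p q : Pt3) : mid p q = mid q p := by simp [mid, add_comm]

lemma mid_self (p : Pt3) : mid p p = p := by
  rw [mid, ← two_smul ℝ p, smul_smul]; norm_num

lemma hmg_mid (p q : Pt3) : hmg (mid p q) = (1 / 2 : ℝ) • (hmg p + hmg q) := by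
  simp only [hmg, mid, Prod.mk_add_mk, Prod.smul_mk]; norm_num

lemma hmg_inj {p q : Pt3} (h : hmg p = hmg q) : p = q := congrArg Prod.snd h

lemma bary_iff {F : Finset Pt3} {w : Pt3 → ℝ} {x : Pt3} :
    Bary F w x ↔ ∑ v ∈ F, w v = 1 ∧ ∑ v ∈ F, w v • v = x := by
  simp only [Bary, hmg, Prod.smul_mk, Prod.ext_iff, Prod.fst_sum, Prod.snd_sum, smul_eq_mul, mul_one]

lemma Bary.unique {V : Finset Pt3} (hV : AI V) {w u : Pt3 → ℝ} {x : Pt3} (hw : Bary V w x)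
    (hu : Bary V u x) : ∀ v ∈ V, w v = u v := by
  intro v hv
  have := hV (fun v => w v - u v) (by
    simp only [sub_smul, Finset.sum_sub_distrib]
    rw [hw, hu, sub_self]) v hv
  linarith

lemma AI.mono {F V : Finset Pt3} (hV : AI V) (h : F ⊆ V) : AI F := by
  intro w hw v hv
  have := hV (fun v => if v ∈ F then w v else 0) (by
    simp only [ite_smul, zero_smul]
    rw [Finset.sum_ite_mem, Finset.inter_eq_right.2 h]; exact hw) v (h hv)
  simpa [hv] using this

lemma Bary.extend {F V : Finset Pt3} (h : F ⊆ V) {w : Pt3 → ℝ} {x : Pt3} (hw : Bary F w x) :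
    Bary V (fun v => if v ∈ F then w v else 0) x := by
  unfold Bary at *
  simp only [ite_smul, zero_smul]
  rw [Finset.sum_ite_mem, Finset.inter_eq_right.2 h]; exact hw

lemma oh_extend {F V : Finset Pt3} (h : F ⊆ V) {x : Pt3} (hx : x ∈ oh F) :
    ∃ w, Bary V w x ∧ (∀ v ∈ F, 0 < w v) ∧ ∀ v, v ∉ F → w v = 0 := by
  obtain ⟨w, hw, hp⟩ := hx
  refine ⟨_, hw.extend h, fun v hv => by simpa [hv] using hp v hv, fun v hv => by simp [hv]⟩

lemma mem_hull_iff {F : Finset Pt3} {x : Pt3} :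
    x ∈ convexHull ℝ (F : Set Pt3) ↔ ∃ w, Bary F w x ∧ ∀ v ∈ F, 0 ≤ w v := by
  rw [Finset.mem_convexHull']
  constructor
  · rintro ⟨w, h0, h1, h2⟩; exact ⟨w, bary_iff.2 ⟨h1, h2⟩, h0⟩
  · rintro ⟨w, h, h0⟩; exact ⟨w, h0, (bary_iff.1 h).1, (bary_iff.1 h).2⟩

lemma hull_extend {F V : Finset Pt3} (h : F ⊆ V) {x : Pt3}
    (hx : x ∈ convexHull ℝ (F : Set Pt3)) :
    ∃ w, Bary V w x ∧ (∀ v, 0 ≤ w v) ∧ ∀ v, v ∉ F → w v = 0 := by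
  obtain ⟨w, hw, hp⟩ := mem_hull_iff.1 hx
  refine ⟨_, hw.extend h, fun v => ?_, fun v hv => by simp [hv]⟩
  by_cases hv : v ∈ F
  · simpa [hv] using hp v hv
  · simp [hv]

lemma oh_subset_hull (F : Finset Pt3) : oh F ⊆ convexHull ℝ (F : Set Pt3) := by
  rintro x ⟨w, hw, hp⟩
  exact mem_hull_iff.2 ⟨w, hw, fun v hv => (hp v hv).le⟩

lemma hull_mono {F V : Finset Pt3} (h : F ⊆ V) :
    convexHull ℝ (F : Set Pt3) ⊆ convexHull ℝ (V : Set Pt3) :=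
  convexHull_mono (Finset.coe_subset.2 h)

/-- Every point of a simplex lies in the relative interior of one of its subsimplices. -/
lemma exists_carrier {V : Finset Pt3} {x : Pt3} (hx : x ∈ convexHull ℝ (V : Set Pt3)) :
    ∃ F ⊆ V, x ∈ oh F := by
  obtain ⟨w, hw, hp⟩ := mem_hull_iff.1 hx
  refine ⟨V.filter (fun v => w v ≠ 0), Finset.filter_subset _ _, w, ?_, ?_⟩
  · unfold Bary at *
    rw [← hw]
    refine Finset.sum_filter_of_ne ?_
    intro v _ h h0
    exact h (by rw [h0, zero_smul])
  · intro v hv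
    rw [Finset.mem_filter] at hv
    exact lt_of_le_of_ne (hp v hv.1) (Ne.symm hv.2)

lemma oh_face_subset {V F C : Finset Pt3} (hV : AI V) (hF : F ⊆ V) (hC : C ⊆ V) {x : Pt3}
    (hx : x ∈ oh F) (hxC : x ∈ convexHull ℝ (C : Set Pt3)) : F ⊆ C := by
  obtain ⟨w, hw, hwp, -⟩ := oh_extend hF hx
  obtain ⟨u, hu, -, hu0⟩ := hull_extend hC hxC
  intro v hv
  by_contra hvC
  have h1 := hwp v hv
  rw [hw.unique hV hu v (hF hv), hu0 v hvC] at h1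
  exact lt_irrefl _ h1

lemma oh_face_unique {V F G : Finset Pt3} (hV : AI V) (hF : F ⊆ V) (hG : G ⊆ V) {x : Pt3}
    (hx : x ∈ oh F) (hxG : x ∈ oh G) : F = G :=
  (oh_face_subset hV hF hG hx (oh_subset_hull _ hxG)).antisymm
    (oh_face_subset hV hG hF hxG (oh_subset_hull _ hx))

lemma oh_nonempty {F : Finset Pt3} (h : F.Nonempty) : (oh F).Nonempty := by
  have hc : (0 : ℝ) < F.card := by exact_mod_cast h.card_pos
  refine ⟨∑ v ∈ F, (F.card : ℝ)⁻¹ • v, fun _ => (F.card : ℝ)⁻¹, bary_iff.2 ⟨?_, rfl⟩,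
    fun _ _ => inv_pos.2 hc⟩
  simp [hc.ne']

lemma ai_of_affineIndependent {V : Finset Pt3}
    (h : AffineIndependent ℝ (fun p : (V : Set Pt3) => (p : Pt3))) : AI V := by
  intro w hw v hv
  have h1 : ∑ v ∈ V, w v = 0 := by
    simpa [hmg, Prod.fst_sum] using congrArg Prod.fst hw
  have h2 : ∑ v ∈ V, w v • v = 0 := by
    simpa [hmg, Prod.snd_sum] using congrArg Prod.snd hw
  have := affineIndependent_iff.1 h V.attach (fun p => w p) ((V.sum_attach w).trans h1)
    ((V.sum_attach (fun v => w v • v)).trans h2) ⟨v, hv⟩ (Finset.mem_attach _ _)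
  exact this

lemma affineIndependent_of_ai {V : Finset Pt3} (h : AI V) :
    AffineIndependent ℝ (fun p : (V : Set Pt3) => (p : Pt3)) := by
  rw [affineIndependent_iff_of_fintype]
  intro w hw hv i
  rw [Finset.univ.weightedVSub_eq_linear_combination hw] at hv
  have key := h (fun v => if hv : v ∈ V then w ⟨v, hv⟩ else 0) ?_ i i.2
  · simpa using key
  · rw [← Finset.sum_coe_sort V]
    have : ∀ p : V, (if hv : (p : Pt3) ∈ V then w ⟨p, hv⟩ else 0) = w p := fun p => by simp
    simp only [this]
    refine Prod.ext ?_ ?_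
    · simpa [hmg, Prod.fst_sum] using hw
    · simpa [hmg, Prod.snd_sum] using hv

/-- The interior of a nondegenerate tetrahedron is its open simplex. -/
lemma interior_hull {V : Finset Pt3} (hV : AI V) (hc : V.card = 4) :
    interior (convexHull ℝ (V : Set Pt3)) = oh V := by
  have hind := affineIndependent_of_ai hV
  have htop : affineSpan ℝ (Set.range (fun p : (V : Set Pt3) => (p : Pt3))) = ⊤ := by
    rw [hind.affineSpan_eq_top_iff_card_eq_finrank_add_one]
    simp [hc]
  let b : AffineBasis (V : Set Pt3) ℝ Pt3 := ⟨_, hind, htop⟩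
  have hb : Set.range b = (V : Set Pt3) := Subtype.range_coe
  have key := b.interior_convexHull
  rw [hb] at key
  rw [key]
  ext x
  have hsum : ∑ i, b.coord i x • hmg i = hmg x := by
    refine Prod.ext ?_ ?_
    · simp only [hmg, Prod.fst_sum, Prod.smul_mk, smul_eq_mul, mul_one]
      exact b.sum_coord_apply_eq_one x
    · simp only [hmg, Prod.snd_sum, Prod.smul_mk]
      exact b.linear_combination_coord_eq_self x
  have hrep : Bary V (fun v => if hv : v ∈ V then b.coord ⟨v, hv⟩ x else 0) x := by
    unfold Bary
    rw [← Finset.sum_coe_sort V, ← hsum]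
    refine Finset.sum_congr rfl fun p _ => ?_
    simp
  constructor
  · intro hx
    refine ⟨_, hrep, fun v hv => ?_⟩
    simpa [hv] using hx ⟨v, hv⟩
  · rintro ⟨w, hw, hp⟩ ⟨i, hi⟩
    have h1 := hw.unique hV hrep i hi
    have h2 := hp i hi
    rw [h1] at h2
    have hi' : i ∈ V := hi
    simpa [hi'] using h2

/-! ### Halving a simplex at an edge midpoint -/

lemma mid_mem_oh {p q : Pt3} (h : p ≠ q) : mid p q ∈ oh {p, q} := by
  refine ⟨fun _ => 1 / 2, ?_, fun _ _ => by norm_num⟩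
  rw [Bary, Finset.sum_pair h, hmg_mid, smul_add]

lemma self_mem_oh (p : Pt3) : p ∈ oh {p} := by
  refine ⟨fun _ => 1, ?_, fun _ _ => by norm_num⟩
  simp [Bary]

lemma mid_notMem {V : Finset Pt3} (hV : AI V) {c d : Pt3} (hc : c ∈ V) (hd : d ∈ V)
    (h : c ≠ d) : mid c d ∉ V := by
  intro hm
  have := oh_face_unique hV (F := {c, d}) (G := {mid c d}) (by
    intro x hx; simp only [Finset.mem_insert, Finset.mem_singleton] at hx
    rcases hx with rfl | rfl <;> assumption) (by simpa using hm) (mid_mem_oh h) (self_mem_oh _)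
  have h2 := congrArg Finset.card this
  rw [Finset.card_pair h] at h2
  simp at h2

/-- Weights on the half simplex containing `c`, rewritten as weights on the whole simplex. -/
lemma sum_push {F : Finset Pt3} {c d : Pt3} (hcd : c ≠ d) (hc : c ∉ F) (hd : d ∉ F)
    (hz : mid c d ∉ insert c (insert d F)) (u : Pt3 → ℝ) :
    ∑ v ∈ insert (mid c d) (insert c F), u v • hmg v =
    ∑ v ∈ insert c (insert d F), (if v = c then u c + u (mid c d) / 2 else
      if v = d then u (mid c d) / 2 else u v) • hmg v := by
  simp only [Finset.mem_insert, not_or] at hz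
  rw [Finset.sum_insert (by simp [hz.1, hz.2.2]), Finset.sum_insert hc,
    Finset.sum_insert (by simp [hcd, hc]), Finset.sum_insert hd]
  have : ∑ v ∈ F, (if v = c then u c + u (mid c d) / 2 else
      if v = d then u (mid c d) / 2 else u v) • hmg v = ∑ v ∈ F, u v • hmg v := by
    refine Finset.sum_congr rfl fun v hv => ?_
    rw [if_neg (ne_of_mem_of_not_mem hv hc), if_neg (ne_of_mem_of_not_mem hv hd)]
  rw [this]
  simp only [if_true, hcd.symm, if_false]
  rw [hmg_mid]
  module

/-- Weights on the new simplex, rewritten as weights on the whole simplex. -/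
lemma sum_push_mid {F : Finset Pt3} {c d : Pt3} (hcd : c ≠ d) (hc : c ∉ F) (hd : d ∉ F)
    (hz : mid c d ∉ insert c (insert d F)) (u : Pt3 → ℝ) :
    ∑ v ∈ insert (mid c d) F, u v • hmg v =
    ∑ v ∈ insert c (insert d F), (if v = c then u (mid c d) / 2 else
      if v = d then u (mid c d) / 2 else u v) • hmg v := by
  simp only [Finset.mem_insert, not_or] at hz
  rw [Finset.sum_insert hz.2.2,
    Finset.sum_insert (by simp [hcd, hc]), Finset.sum_insert hd]
  have : ∑ v ∈ F, (if v = c then u (mid c d) / 2 else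
      if v = d then u (mid c d) / 2 else u v) • hmg v = ∑ v ∈ F, u v • hmg v := by
    refine Finset.sum_congr rfl fun v hv => ?_
    rw [if_neg (ne_of_mem_of_not_mem hv hc), if_neg (ne_of_mem_of_not_mem hv hd)]
  rw [this]
  simp only [if_true, hcd.symm, if_false]
  rw [hmg_mid]
  module

lemma split_mid_notMem {F : Finset Pt3} {c d : Pt3} (hcd : c ≠ d)
    (hV : AI (insert c (insert d F))) : mid c d ∉ insert c (insert d F) :=
  mid_notMem hV (by simp) (by simp) hcd

section Split

variable {F : Finset Pt3} {c d : Pt3} (hcd : c ≠ d) (hc : c ∉ F) (hd : d ∉ F)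
  (hV : AI (insert c (insert d F)))
include hcd hc hd hV

lemma half_ai : AI (insert (mid c d) (insert c F)) := by
  intro u hu
  have hz := split_mid_notMem hcd hV
  rw [sum_push hcd hc hd hz] at hu
  have key := hV _ hu
  have h1 := key c (by simp)
  have h2 := key d (by simp)
  simp only [if_true, hcd.symm, if_false] at h1 h2
  intro v hv
  rw [Finset.mem_insert, Finset.mem_insert] at hv
  rcases hv with rfl | rfl | hv
  · linarith
  · linarith
  · have h3 := key v (by simp [hv])
    rwa [if_neg (ne_of_mem_of_not_mem hv hc), if_neg (ne_of_mem_of_not_mem hv hd)] at h3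

lemma half_oh {x : Pt3} (hx : x ∈ oh (insert (mid c d) (insert c F))) :
    ∃ w, Bary (insert c (insert d F)) w x ∧ (∀ v ∈ insert c (insert d F), 0 < w v) ∧
      w d < w c := by
  have hz := split_mid_notMem hcd hV
  obtain ⟨u, hu, hp⟩ := hx
  have h1 := hp c (by simp)
  have h2 := hp (mid c d) (by simp)
  refine ⟨_, (sum_push hcd hc hd hz u).symm.trans hu, fun v hv => ?_, ?_⟩
  · by_cases hvc : v = c
    · rw [if_pos hvc]; linarith
    · rw [if_neg hvc]
      by_cases hvd : v = d
      · rw [if_pos hvd]; linarith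
      · rw [if_neg hvd]
        refine hp v ?_
        simp only [Finset.mem_insert] at hv ⊢
        tauto
  · simp only [if_true, hcd.symm, if_false]; linarith

lemma half_hull {x : Pt3}
    (hx : x ∈ convexHull ℝ ((insert (mid c d) (insert c F) : Finset Pt3) : Set Pt3)) :
    ∃ w, Bary (insert c (insert d F)) w x ∧ (∀ v ∈ insert c (insert d F), 0 ≤ w v) ∧
      w d ≤ w c := by
  have hz := split_mid_notMem hcd hV
  obtain ⟨u, hu, hp⟩ := mem_hull_iff.1 hx
  have h1 := hp c (by simp)
  have h2 := hp (mid c d) (by simp)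
  refine ⟨_, (sum_push hcd hc hd hz u).symm.trans hu, fun v hv => ?_, ?_⟩
  · by_cases hvc : v = c
    · rw [if_pos hvc]; linarith
    · rw [if_neg hvc]
      by_cases hvd : v = d
      · rw [if_pos hvd]; linarith
      · rw [if_neg hvd]
        refine hp v ?_
        simp only [Finset.mem_insert] at hv ⊢
        tauto
  · simp only [if_true, hcd.symm, if_false]; linarith

lemma mid_oh {x : Pt3} (hx : x ∈ oh (insert (mid c d) F)) :
    ∃ w, Bary (insert c (insert d F)) w x ∧ (∀ v ∈ insert c (insert d F), 0 < w v) ∧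
      w d = w c := by
  have hz := split_mid_notMem hcd hV
  obtain ⟨u, hu, hp⟩ := hx
  have h2 := hp (mid c d) (by simp)
  refine ⟨_, (sum_push_mid hcd hc hd hz u).symm.trans hu, fun v hv => ?_, ?_⟩
  · by_cases hvc : v = c
    · rw [if_pos hvc]; linarith
    · rw [if_neg hvc]
      by_cases hvd : v = d
      · rw [if_pos hvd]; linarith
      · rw [if_neg hvd]
        refine hp v ?_
        simp only [Finset.mem_insert] at hv ⊢
        tauto
  · simp only [if_true, hcd.symm, if_false]

lemma half_oh_subset : oh (insert (mid c d) (insert c F)) ⊆ oh (insert c (insert d F)) := by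
  intro x hx
  obtain ⟨w, h1, h2, -⟩ := half_oh hcd hc hd hV hx
  exact ⟨w, h1, h2⟩

lemma mid_oh_subset : oh (insert (mid c d) F) ⊆ oh (insert c (insert d F)) := by
  intro x hx
  obtain ⟨w, h1, h2, -⟩ := mid_oh hcd hc hd hV hx
  exact ⟨w, h1, h2⟩

lemma half_mid_disj {x : Pt3} (hx : x ∈ oh (insert (mid c d) (insert c F)))
    (hy : x ∈ oh (insert (mid c d) F)) : False := by
  obtain ⟨w, h1, -, h3⟩ := half_oh hcd hc hd hV hx
  obtain ⟨u, h1', -, h3'⟩ := mid_oh hcd hc hd hV hy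
  have a := h1.unique hV h1' c (by simp)
  have b := h1.unique hV h1' d (by simp)
  linarith

lemma half_half_disj {x : Pt3} (hx : x ∈ oh (insert (mid c d) (insert c F)))
    (hy : x ∈ oh (insert (mid d c) (insert d F))) : False := by
  obtain ⟨w, h1, -, h3⟩ := half_oh hcd hc hd hV hx
  have hV' := hV
  rw [Finset.insert_comm] at hV'
  obtain ⟨u, h1', -, h3'⟩ := half_oh hcd.symm hd hc hV' hy
  rw [Finset.insert_comm] at h1'
  have a := h1.unique hV h1' c (by simp)
  have b := h1.unique hV h1' d (by simp)
  linarith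

end Split

/-! ### Laminar subdivision of marked simplices -/

/-- A vertex set of at most three points together with the edge at which it will be halved
(meaningful for edges and triangles). -/
abbrev Node := Finset Pt3 × Finset Pt3

/-- The half of the simplex on `c`, `d`, `F` (halved at the edge `cd`) that contains `c`. A
triangle is marked opposite its newest vertex; an edge is marked by itself. -/
def halfNode (c d : Pt3) (F : Finset Pt3) : Node :=
  (insert (mid c d) (insert c F),
    if (insert (mid c d) (insert c F)).card = 3 then insert c F
    else insert (mid c d) (insert c F))

/-- The cell separating the two halves. -/
def midNode (c d : Pt3) (F : Finset Pt3) : Node := (insert (mid c d) F, insert (mid c d) F)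

/-- `Split n n'`: `n'` is one of the three cells into which the open simplex `n` is divided when
it is halved at its marked edge. -/
def Split (n n' : Node) : Prop :=
  ∃ c d F, c ≠ d ∧ c ∉ F ∧ d ∉ F ∧ AI (insert c (insert d F)) ∧
    n = (insert c (insert d F), {c, d}) ∧ (n' = halfNode c d F ∨ n' = midNode c d F)

/-- Descent under repeated splitting. -/
abbrev Desc : Node → Node → Prop := Relation.ReflTransGen Split

/-- Two cells are comparable when one descends from the other. -/
def Comp (n g : Node) : Prop := Desc n g ∨ Desc g n

lemma Comp.symm {n g : Node} (h : Comp n g) : Comp g n := Or.symm h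

lemma split_cases {c d : Pt3} {F : Finset Pt3} (hcd : c ≠ d) (hc : c ∉ F) (hd : d ∉ F)
    {n' : Node} (h : Split (insert c (insert d F), {c, d}) n') :
    n' = halfNode c d F ∨ n' = halfNode d c F ∨ n' = midNode c d F := by
  obtain ⟨p, q, G, hpq, hp, hq, -, he, h⟩ := h
  obtain ⟨h1, h2⟩ := Prod.mk.inj he
  have hF : F = (insert c (insert d F)) \ {c, d} := by
    ext x; simp only [Finset.mem_sdiff, Finset.mem_insert, Finset.mem_singleton]
    constructor
    · intro hx
      refine ⟨Or.inr (Or.inr hx), ?_⟩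
      rintro (rfl | rfl) <;> contradiction
    · tauto
  have hG : G = (insert p (insert q G)) \ {p, q} := by
    ext x; simp only [Finset.mem_sdiff, Finset.mem_insert, Finset.mem_singleton]
    constructor
    · intro hx
      refine ⟨Or.inr (Or.inr hx), ?_⟩
      rintro (rfl | rfl) <;> contradiction
    · tauto
  have hFG : G = F := by rw [hF, hG, h1, h2]
  subst hFG
  have hpc : p = c ∨ p = d := by
    have : p ∈ ({c, d} : Finset Pt3) := by rw [h2]; simp
    simpa using this
  have hqc : q = c ∨ q = d := by
    have : q ∈ ({c, d} : Finset Pt3) := by rw [h2]; simp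
    simpa using this
  rcases hpc with rfl | rfl <;> rcases hqc with rfl | rfl
  · exact absurd rfl hpq
  · tauto
  · rcases h with h | h
    · exact Or.inr (Or.inl h)
    · right; right; rw [h, midNode, midNode, mid_comm]
  · exact absurd rfl hpq

lemma Split.oh_subset {n n' : Node} (h : Split n n') : oh n'.1 ⊆ oh n.1 := by
  obtain ⟨c, d, F, hcd, hc, hd, hV, rfl, rfl | rfl⟩ := h
  · exact half_oh_subset hcd hc hd hV
  · exact mid_oh_subset hcd hc hd hV

lemma Desc.oh_subset {n n' : Node} (h : Desc n n') : oh n'.1 ⊆ oh n.1 := by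
  induction h with
  | refl => exact subset_rfl
  | tail _ h ih => exact h.oh_subset.trans ih

/-- The three cells of a split are disjoint. -/
lemma Split.disj {n n₁ n₂ : Node} (h₁ : Split n n₁) (h₂ : Split n n₂) {x : Pt3}
    (hx₁ : x ∈ oh n₁.1) (hx₂ : x ∈ oh n₂.1) : n₁ = n₂ := by
  obtain ⟨c, d, F, hcd, hc, hd, hV, rfl, h₁⟩ := h₁
  have hV' := hV
  rw [Finset.insert_comm] at hV'
  rcases split_cases hcd hc hd h₂ with rfl | rfl | rfl <;> rcases h₁ with rfl | rfl
  · rfl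
  · exact (half_mid_disj hcd hc hd hV hx₂ hx₁).elim
  · exact (half_half_disj hcd hc hd hV hx₁ hx₂).elim
  · refine (half_mid_disj hcd.symm hd hc hV' hx₂ ?_).elim
    rw [mid_comm]; exact hx₁
  · exact (half_mid_disj hcd hc hd hV hx₁ hx₂).elim
  · rfl

lemma Split.hull {n n' : Node} (h : Split n n') :
    (n'.1 : Set Pt3) ⊆ convexHull ℝ (n.1 : Set Pt3) := by
  obtain ⟨c, d, F, hcd, hc, hd, hV, rfl, h⟩ := h
  have hz : mid c d ∈ convexHull ℝ ((insert c (insert d F) : Finset Pt3) : Set Pt3) := by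
    refine hull_mono ?_ (oh_subset_hull _ (mid_mem_oh hcd))
    intro x; simp only [Finset.mem_insert, Finset.mem_singleton]; tauto
  have : n'.1 ⊆ insert (mid c d) (insert c (insert d F)) := by
    rcases h with rfl | rfl <;> intro x <;>
      simp only [halfNode, midNode, Finset.mem_insert] <;> tauto
  intro x hx
  rcases Finset.mem_insert.1 (this hx) with rfl | hx
  · exact hz
  · exact subset_convexHull _ _ hx

lemma Desc.hull {n n' : Node} (h : Desc n n') :
    (n'.1 : Set Pt3) ⊆ convexHull ℝ (n.1 : Set Pt3) := by
  induction h with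
  | refl => exact subset_convexHull _ _
  | tail _ h ih => exact h.hull.trans (convexHull_min ih (convex_convexHull _ _))

/-- Comparability survives splitting of one of the two cells, as long as the cells meet. -/
lemma Comp.split {n n' g : Node} (h : Comp n g) (hs : Split n n') {x : Pt3}
    (hx : x ∈ oh n'.1) (hg : x ∈ oh g.1) : Comp n' g := by
  rcases h with h | h
  · rcases h.cases_head with rfl | ⟨m, hm, hmg⟩
    · exact Or.inr (.single hs)
    · rw [hs.disj hm hx (Desc.oh_subset hmg hg)]
      exact Or.inl hmg
  · exact Or.inr (h.tail hs)

lemma exists_other {n n' : Node} (h : Split n n') :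
    ∃ m, Split n m ∧ m ≠ n' ∧ (oh m.1).Nonempty := by
  obtain ⟨c, d, F, hcd, hc, hd, hV, rfl, rfl | rfl⟩ := h
  · refine ⟨midNode c d F, ⟨c, d, F, hcd, hc, hd, hV, rfl, Or.inr rfl⟩, ?_,
      oh_nonempty (Finset.insert_nonempty _ _)⟩
    intro he
    obtain ⟨x, hx⟩ := oh_nonempty (F := (midNode c d F).1) (Finset.insert_nonempty _ _)
    exact half_mid_disj hcd hc hd hV (he ▸ hx : x ∈ oh (halfNode c d F).1) hx
  · refine ⟨halfNode c d F, ⟨c, d, F, hcd, hc, hd, hV, rfl, Or.inl rfl⟩, ?_,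
      oh_nonempty (Finset.insert_nonempty _ _)⟩
    intro he
    obtain ⟨x, hx⟩ := oh_nonempty (F := (midNode c d F).1) (Finset.insert_nonempty _ _)
    exact half_mid_disj hcd hc hd hV (he ▸ hx : x ∈ oh (halfNode c d F).1) hx

/-- Splitting is proper: a descendant with the same vertex set is the cell itself. -/
lemma Desc.eq_of_fst_eq {n n' : Node} (h : Desc n n') (he : n.1 = n'.1) : n = n' := by
  rcases h.cases_head with rfl | ⟨m, hm, hmn⟩
  · rfl
  · obtain ⟨m', hm', hne, x, hx⟩ := exists_other hm
    have : x ∈ oh m.1 := Desc.oh_subset hmn (he ▸ hm'.oh_subset hx)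
    exact (hne (hm'.disj hm hx this)).elim

lemma Comp.eq_of_fst_eq {n n' : Node} (h : Comp n n') (he : n.1 = n'.1) : n = n' := by
  rcases h with h | h
  · exact h.eq_of_fst_eq he
  · exact (h.eq_of_fst_eq he.symm).symm

/-! ### One bisection of a marked tetrahedron -/

/-- A labelling of the vertices of `τ`: the refinement edge is `cd`, the opposite edge `ab`. -/
structure Quad (τ : MTet) (c d a b : Pt3) : Prop where
  hcd : c ≠ d
  hca : c ≠ a
  hcb : c ≠ b
  hda : d ≠ a
  hdb : d ≠ b
  hab : a ≠ b
  V : τ.V = insert c (insert d {a, b})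
  ref : τ.ref = {c, d}

lemma Quad.swap {τ : MTet} {c d a b : Pt3} (q : Quad τ c d a b) : Quad τ d c a b :=
  ⟨q.hcd.symm, q.hda, q.hdb, q.hca, q.hcb, q.hab, by rw [q.V, Finset.insert_comm],
    by rw [q.ref, Finset.pair_comm]⟩

lemma Quad.swap' {τ : MTet} {c d a b : Pt3} (q : Quad τ c d a b) : Quad τ c d b a :=
  ⟨q.hcd, q.hcb, q.hca, q.hdb, q.hda, q.hab.symm, by rw [q.V, Finset.pair_comm a b], q.ref⟩

lemma _root_.MTet.Valid.ai {τ : MTet} (h : τ.Valid) : AI τ.V := ai_of_affineIndependent h.2.1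

lemma exists_quad {τ : MTet} (h : τ.Valid) {c : Pt3} (hc : c ∈ τ.ref) :
    ∃ d a b, Quad τ c d a b := by
  obtain ⟨h4, -, hsub, h2, -⟩ := h
  obtain ⟨d, hd⟩ : ∃ d, τ.ref.erase c = {d} := Finset.card_eq_one.1 (by
    rw [Finset.card_erase_of_mem hc, h2])
  obtain ⟨a, b, hab, he⟩ : ∃ a b, a ≠ b ∧ τ.V \ τ.ref = {a, b} := Finset.card_eq_two.1 (by
    rw [Finset.card_sdiff_of_subset hsub, h4, h2])
  have href : τ.ref = {c, d} := by rw [← Finset.insert_erase hc, hd]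
  have hcd : c ≠ d := by
    rintro rfl
    rw [href] at h2; simp at h2
  have ha : a ∉ τ.ref := (Finset.mem_sdiff.1 (he ▸ Finset.mem_insert_self a {b})).2
  have hb : b ∉ τ.ref := (Finset.mem_sdiff.1
    (he ▸ Finset.mem_insert_of_mem (Finset.mem_singleton_self b))).2
  rw [href] at ha hb
  simp only [Finset.mem_insert, Finset.mem_singleton, not_or] at ha hb
  refine ⟨d, a, b, hcd, Ne.symm ha.1, Ne.symm hb.1, Ne.symm ha.2, Ne.symm hb.2, hab, ?_, href⟩
  rw [← Finset.sdiff_union_of_subset hsub, he, href]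
  ext x; simp only [Finset.mem_union, Finset.mem_insert, Finset.mem_singleton]; tauto

lemma card_triple {a b c : Pt3} (hab : a ≠ b) (hac : a ≠ c) (hbc : b ≠ c) :
    ({a, b, c} : Finset Pt3).card = 3 := Finset.card_eq_three.2 ⟨a, b, c, hab, hac, hbc, rfl⟩

section Child

variable {τ : MTet} {c d a b : Pt3} (hτ : τ.Valid) (q : Quad τ c d a b)
include q

lemma Quad.centroid : τ.ref.centroid ℝ id = mid c d := by
  let _ : Invertible (2 : ℝ) := invertibleOfNonzero two_ne_zero
  rw [q.ref, Finset.centroid_pair]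
  simp only [id, vsub_eq_sub, vadd_eq_add, mid]
  module

lemma Quad.opp : τ.V \ τ.ref = {a, b} := by
  rw [q.V, q.ref]
  ext x; simp only [Finset.mem_sdiff, Finset.mem_insert, Finset.mem_singleton]
  constructor
  · tauto
  · rintro (rfl | rfl)
    · exact ⟨by tauto, by simp [q.hca.symm, q.hda.symm]⟩
    · exact ⟨by tauto, by simp [q.hcb.symm, q.hdb.symm]⟩

lemma Quad.child_V : (τ.child c).V = insert (mid c d) (insert c {a, b}) := by
  simp only [MTet.child, q.centroid, q.opp]

lemma Quad.child_ref : (τ.child c).ref = τ.mark {c, a, b} := by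
  simp only [MTet.child, q.opp]

lemma Quad.child_mark (G : Finset Pt3) : (τ.child c).mark G =
    if G = {c, a, b} then τ.mark {c, a, b}
    else if G = {mid c d, a, b} then
      if τ.Planar ∧ τ.flag = true then insert (mid c d) (τ.mark {c, a, b} ∩ {a, b}) else {a, b}
    else G.erase (mid c d) := by
  simp only [MTet.child, q.centroid, q.opp]

lemma Quad.inh_subset : {c, a, b} ⊆ τ.V := by
  rw [q.V]; intro x; simp only [Finset.mem_insert, Finset.mem_singleton]; tauto

lemma Quad.inh_card : ({c, a, b} : Finset Pt3).card = 3 := card_triple q.hca q.hcb q.hab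

lemma Quad.c_notMem : c ∉ ({a, b} : Finset Pt3) := by simp [q.hca, q.hcb]

lemma Quad.d_notMem : d ∉ ({a, b} : Finset Pt3) := by simp [q.hda, q.hdb]

include hτ

lemma Quad.ai : AI (insert c (insert d {a, b})) := q.V ▸ hτ.ai

lemma Quad.z_notMem : mid c d ∉ τ.V := by
  rw [q.V]; exact split_mid_notMem q.hcd (q.ai hτ)

lemma Quad.zc : mid c d ≠ c := fun h => q.z_notMem hτ (by rw [h, q.V]; simp)
lemma Quad.za : mid c d ≠ a := fun h => q.z_notMem hτ (by rw [h, q.V]; simp)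
lemma Quad.zb : mid c d ≠ b := fun h => q.z_notMem hτ (by rw [h, q.V]; simp)

lemma Quad.newF_ne : ({mid c d, a, b} : Finset Pt3) ≠ {c, a, b} := by
  intro h
  have : mid c d ∈ ({c, a, b} : Finset Pt3) := h ▸ Finset.mem_insert_self _ _
  exact q.z_notMem hτ (q.inh_subset this)

/-- Bisection fixes the marks of faces containing the new vertex, other than the new face. -/
lemma Quad.child_mark_of_mem {G : Finset Pt3} (hz : mid c d ∈ G) (h : G ≠ {mid c d, a, b}) :
    (τ.child c).mark G = G.erase (mid c d) := by
  rw [q.child_mark, if_neg, if_neg h]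
  rintro rfl
  exact q.z_notMem hτ (q.inh_subset hz)

lemma Quad.child_mark_new : (τ.child c).mark {mid c d, a, b} =
    if τ.Planar ∧ τ.flag = true then insert (mid c d) (τ.mark {c, a, b} ∩ {a, b}) else {a, b} := by
  rw [q.child_mark, if_neg (q.newF_ne hτ), if_pos rfl]

lemma Quad.child_card : (τ.child c).V.card = 4 := by
  rw [q.child_V, Finset.card_insert_of_notMem, q.inh_card]
  exact fun h => q.z_notMem hτ (q.inh_subset h)

end Child

/-- In a planar tetrahedron all marked edges avoid some vertex. -/
lemma planar_avoid {τ : MTet} (hτ : τ.Valid) (hp : τ.Planar) :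
    ∃ v ∈ τ.V, ∀ F ⊆ τ.V, F.card = 3 → v ∉ τ.mark F := by
  by_contra! hcon
  have hsub : (τ.V : Set Pt3) ⊆
      ⋃ F ∈ {F : Finset Pt3 | F ⊆ τ.V ∧ F.card = 3}, (τ.mark F : Set Pt3) := by
    intro v hv
    obtain ⟨F, hF, h3, hm⟩ := hcon v hv
    exact Set.mem_biUnion (show F ∈ {F : Finset Pt3 | F ⊆ τ.V ∧ F.card = 3} from ⟨hF, h3⟩) hm
  have h2 := coplanar_iff_finrank_le_two.1 (hp.subset hsub)
  have h3 := hτ.2.1.finrank_vectorSpan (n := 3) (by simp [hτ.1])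
  rw [Subtype.range_coe] at h3
  have h3' : Module.finrank ℝ (vectorSpan ℝ (τ.V : Set Pt3)) = 3 := h3
  omega

lemma planar_of_avoid {τ : MTet} (hτ : τ.Valid) {v : Pt3} (hv : v ∈ τ.V)
    (h : ∀ F ⊆ τ.V, F.card = 3 → v ∉ τ.mark F) : τ.Planar := by
  obtain ⟨x, y, z, -, -, -, he⟩ := Finset.card_eq_three.1
    (show (τ.V.erase v).card = 3 by rw [Finset.card_erase_of_mem hv, hτ.1])
  refine (coplanar_triple ℝ x y z).subset ?_
  refine Set.iUnion₂_subset fun F hF w hw => ?_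
  have hwv : w ∈ τ.V.erase v := Finset.mem_erase.2
    ⟨fun hwv => h F hF.1 hF.2 (hwv ▸ hw), hF.1 ((hτ.2.2.2.2 F hF.1 hF.2).1 hw)⟩
  rw [he] at hwv
  simpa using hwv

lemma mark_pair {τ : MTet} (hτ : τ.Valid) {c a b : Pt3} (hsub : {c, a, b} ⊆ τ.V)
    (hca : c ≠ a) (hcb : c ≠ b) (hab : a ≠ b) (h : b ∉ τ.mark {c, a, b}) :
    τ.mark {c, a, b} = {c, a} := by
  obtain ⟨h1, h2, -⟩ := hτ.2.2.2.2 {c, a, b} hsub (card_triple hca hcb hab)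
  refine Finset.eq_of_subset_of_card_le ?_ (by rw [h2, Finset.card_pair hca])
  intro x hx
  have hxb : x ≠ b := fun hb => h (hb ▸ hx)
  have := h1 hx
  simp only [Finset.mem_insert, Finset.mem_singleton] at this ⊢
  tauto

/-- In the planar case both inherited faces are marked by edges through the same vertex of the
edge opposite to the refinement edge. -/
lemma planar_marks {τ : MTet} (hτ : τ.Valid) {c d a b : Pt3} (q : Quad τ c d a b)
    (hp : τ.Planar) : ∃ e ∈ ({a, b} : Finset Pt3),
      τ.mark {c, a, b} = {c, e} ∧ τ.mark {d, a, b} = {d, e} := by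
  obtain ⟨v, hv, h⟩ := planar_avoid hτ hp
  have hr : v ∉ τ.ref := by
    have hs : ({c, d, a} : Finset Pt3) ⊆ τ.V := by
      rw [q.V]; intro x; simp only [Finset.mem_insert, Finset.mem_singleton]; tauto
    have h3 := card_triple q.hcd q.hca q.hda
    rw [← (hτ.2.2.2.2 {c, d, a} hs h3).2.2 (by
      rw [q.ref]; intro x; simp only [Finset.mem_insert, Finset.mem_singleton]; tauto)]
    exact h _ hs h3
  have hv' : v = a ∨ v = b := by
    have : v ∈ τ.V \ τ.ref := Finset.mem_sdiff.2 ⟨hv, hr⟩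
    rw [q.opp] at this; simpa using this
  have hsc := q.inh_subset
  have hsd := q.swap.inh_subset
  rcases hv' with rfl | rfl
  · refine ⟨b, by simp, ?_, ?_⟩
    · have := h _ hsc q.inh_card
      rw [Finset.pair_comm] at hsc this ⊢
      exact mark_pair hτ hsc q.hcb q.hca q.hab.symm this
    · have := h _ hsd q.swap.inh_card
      rw [Finset.pair_comm] at hsd this ⊢
      exact mark_pair hτ hsd q.hdb q.hda q.hab.symm this
  · refine ⟨a, by simp, ?_, ?_⟩
    · exact mark_pair hτ hsc q.hca q.hcb q.hab (h _ hsc q.inh_card)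
    · exact mark_pair hτ hsd q.hda q.hdb q.hab (h _ hsd q.swap.inh_card)

lemma pair_inter {c a b e : Pt3} (hc : c ∉ ({a, b} : Finset Pt3))
    (he : e ∈ ({a, b} : Finset Pt3)) : ({c, e} : Finset Pt3) ∩ {a, b} = {e} := by
  rw [Finset.insert_inter_of_notMem hc, Finset.singleton_inter_of_mem he]

/-- Both children assign the same mark to the new face. -/
lemma child_mark_new_eq {τ : MTet} (hτ : τ.Valid) {c d a b : Pt3} (q : Quad τ c d a b) :
    (τ.child c).mark {mid c d, a, b} = (τ.child d).mark {mid c d, a, b} := by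
  have h2 := q.swap.child_mark_new hτ
  rw [mid_comm] at h2
  rw [q.child_mark_new hτ, h2]
  split_ifs with hp
  · obtain ⟨e, he, h1, h2⟩ := planar_marks hτ q hp.1
    rw [h1, h2, pair_inter q.c_notMem he, pair_inter q.d_notMem he]
  · rfl

lemma child_valid {τ : MTet} (hτ : τ.Valid) {c : Pt3} (hc : c ∈ τ.ref) : (τ.child c).Valid := by
  obtain ⟨d, a, b, q⟩ := exists_quad hτ hc
  obtain ⟨m1, m2, -⟩ := hτ.2.2.2.2 _ q.inh_subset q.inh_card
  have hzref : mid c d ∉ τ.mark {c, a, b} := fun h => q.z_notMem hτ (q.inh_subset (m1 h))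
  refine ⟨q.child_card hτ, ?_, ?_, ?_, ?_⟩
  · refine affineIndependent_of_ai ?_
    rw [q.child_V]
    exact half_ai q.hcd q.c_notMem q.d_notMem (q.ai hτ)
  · rw [q.child_ref, q.child_V]
    exact m1.trans (Finset.subset_insert _ _)
  · rw [q.child_ref, m2]
  · intro F hF h3
    rw [q.child_ref]
    by_cases h1 : F = {c, a, b}
    · subst h1
      rw [q.child_mark, if_pos rfl]
      exact ⟨m1, m2, fun _ => rfl⟩
    by_cases h2 : F = {mid c d, a, b}
    · subst h2
      rw [q.child_mark_new hτ]
      split_ifs with hp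
      · obtain ⟨e, he, h1, -⟩ := planar_marks hτ q hp.1
        rw [h1, pair_inter q.c_notMem he]
        have hze : mid c d ≠ e := by
          rintro rfl
          simp only [Finset.mem_insert, Finset.mem_singleton] at he
          exact he.elim (q.za hτ) (q.zb hτ)
        refine ⟨?_, Finset.card_pair hze, ?_⟩
        · exact Finset.insert_subset_insert _ (by simpa using he)
        · intro hs
          have := hs (Finset.mem_insert_self c _)
          simp only [Finset.mem_insert, Finset.mem_singleton] at this
          rcases this with h | h | h
          · exact (q.zc hτ h.symm).elim
          · exact (q.hca h).elim
          · exact (q.hcb h).elim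
      · refine ⟨Finset.subset_insert _ _, Finset.card_pair q.hab, fun hs => ?_⟩
        symm
        refine Finset.eq_of_subset_of_card_le ?_ (by rw [m2, Finset.card_pair q.hab])
        intro x hx
        rcases Finset.mem_insert.1 (hs hx) with rfl | h
        · exact (hzref hx).elim
        · exact h
    · have hz : mid c d ∈ F := by
        by_contra hz
        refine h1 (Finset.eq_of_subset_of_card_le ?_ (by rw [h3, q.inh_card]))
        intro x hx
        have := hF hx
        rw [q.child_V] at this
        rcases Finset.mem_insert.1 this with rfl | h
        · exact (hz hx).elim
        · exact h
      rw [q.child_mark_of_mem hτ hz h2]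
      have hcard : (F.erase (mid c d)).card = 2 := by rw [Finset.card_erase_of_mem hz, h3]
      refine ⟨Finset.erase_subset _ _, hcard, fun hs => ?_⟩
      refine (Finset.eq_of_subset_of_card_le ?_ (by rw [m2, hcard])).symm
      intro x hx
      exact Finset.mem_erase.2 ⟨fun h => hzref (h ▸ hx), hs hx⟩

/-- The node of a face of `τ`: a triangle carries its marked edge. -/
def node (τ : MTet) (F : Finset Pt3) : Node := (F, if F.card = 3 then τ.mark F else F)

lemma node_ref {τ : MTet} (hτ : τ.Valid) {c d : Pt3} {H : Finset Pt3} (href : τ.ref = {c, d})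
    (hs : insert c (insert d H) ⊆ τ.V) (hcd : c ≠ d) (hc : c ∉ H) (hd : d ∉ H)
    (hH : H.card ≤ 1) : node τ (insert c (insert d H)) = (insert c (insert d H), {c, d}) := by
  have hcard : (insert c (insert d H)).card = H.card + 2 := by
    rw [Finset.card_insert_of_notMem (by simp [hcd, hc]), Finset.card_insert_of_notMem hd]
  simp only [node]
  split_ifs with h3
  · rw [(hτ.2.2.2.2 _ hs h3).2.2, href]
    rw [href]; intro x; simp only [Finset.mem_insert, Finset.mem_singleton]; tauto
  · have : H = ∅ := Finset.card_eq_zero.1 (by omega)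
    subst this
    simp

/-- Each face of a child is a face of the parent, a cell of a split face of the parent, or the
new face. -/
lemma child_face {τ : MTet} (hτ : τ.Valid) {c d a b : Pt3} (q : Quad τ c d a b)
    {G : Finset Pt3} (hG : G ⊆ (τ.child c).V) (h3 : G.card ≤ 3) :
    (∃ F ⊆ τ.V, F.card ≤ 3 ∧ (node (τ.child c) G = node τ F ∨
      Split (node τ F) (node (τ.child c) G))) ∨ G = {mid c d, a, b} := by
  rw [q.child_V] at hG
  by_cases hz : mid c d ∈ G
  swap
  · left
    have hG' : G ⊆ {c, a, b} := by
      intro x hx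
      rcases Finset.mem_insert.1 (hG hx) with rfl | h
      · exact (hz hx).elim
      · exact h
    refine ⟨G, hG'.trans q.inh_subset, h3, Or.inl ?_⟩
    simp only [node]
    split_ifs with h
    · have : G = {c, a, b} := Finset.eq_of_subset_of_card_le hG' (by rw [h, q.inh_card])
      subst this
      rw [q.child_mark, if_pos rfl]
    · rfl
  by_cases hn : G = {mid c d, a, b}
  · exact Or.inr hn
  left
  by_cases hc : c ∈ G
  · have hzc := q.zc hτ
    set H := (G.erase (mid c d)).erase c with hH
    have hGH : G = insert (mid c d) (insert c H) := by
      rw [hH, Finset.insert_erase (by simp [hc, hzc.symm]), Finset.insert_erase hz]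
    have hcard : H.card + 2 = G.card := by
      have h1 := Finset.card_erase_add_one hz
      have h2 := Finset.card_erase_add_one
        (show c ∈ G.erase (mid c d) by simp [hc, hzc.symm])
      rw [← hH] at h2; omega
    have hHs : H ⊆ {a, b} := by
      intro x hx
      rw [hH, Finset.mem_erase, Finset.mem_erase] at hx
      have := hG hx.2.2
      simp only [Finset.mem_insert] at this ⊢
      tauto
    have hcH : c ∉ H := fun h => q.c_notMem (hHs h)
    have hdH : d ∉ H := fun h => q.d_notMem (hHs h)
    have hsub : insert c (insert d H) ⊆ τ.V := by
      rw [q.V]; exact Finset.insert_subset_insert _ (Finset.insert_subset_insert _ hHs)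
    have hFc : (insert c (insert d H)).card = H.card + 2 := by
      rw [Finset.card_insert_of_notMem (by simp [q.hcd, hcH]), Finset.card_insert_of_notMem hdH]
    refine ⟨insert c (insert d H), hsub, by omega, Or.inr ?_⟩
    rw [node_ref hτ q.ref hsub q.hcd hcH hdH (by omega)]
    refine ⟨c, d, H, q.hcd, hcH, hdH, hτ.ai.mono hsub, rfl, Or.inl ?_⟩
    rw [halfNode, node, ← hGH, q.child_mark_of_mem hτ hz hn]
    congr 2
    rw [hGH, Finset.erase_insert]
    intro h
    rcases Finset.mem_insert.1 h with h | h
    · exact hzc h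
    · exact q.z_notMem hτ (hsub (by simp [h]))
  · set H := G.erase (mid c d) with hH
    have hGH : G = insert (mid c d) H := by rw [hH, Finset.insert_erase hz]
    have hcard : H.card + 1 = G.card := Finset.card_erase_add_one hz
    have hHs : H ⊆ {a, b} := by
      intro x hx
      rw [hH, Finset.mem_erase] at hx
      have := hG hx.2
      have hxc : x ≠ c := fun h => hc (h ▸ hx.2)
      simp only [Finset.mem_insert] at this ⊢
      tauto
    have hH1 : H.card ≤ 1 := by
      by_contra hlt
      have : H = {a, b} := Finset.eq_of_subset_of_card_le hHs (by
        rw [Finset.card_pair q.hab]; omega)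
      exact hn (by rw [hGH, this])
    have hcH : c ∉ H := fun h => q.c_notMem (hHs h)
    have hdH : d ∉ H := fun h => q.d_notMem (hHs h)
    have hsub : insert c (insert d H) ⊆ τ.V := by
      rw [q.V]; exact Finset.insert_subset_insert _ (Finset.insert_subset_insert _ hHs)
    have hFc : (insert c (insert d H)).card = H.card + 2 := by
      rw [Finset.card_insert_of_notMem (by simp [q.hcd, hcH]), Finset.card_insert_of_notMem hdH]
    refine ⟨insert c (insert d H), hsub, by omega, Or.inr ?_⟩
    rw [node_ref hτ q.ref hsub q.hcd hcH hdH hH1]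
    refine ⟨c, d, H, q.hcd, hcH, hdH, hτ.ai.mono hsub, rfl, Or.inr ?_⟩
    rw [midNode, node, ← hGH, if_neg (by omega)]

lemma child_oh_subset {τ : MTet} (hτ : τ.Valid) {c : Pt3} (hc : c ∈ τ.ref) :
    oh (τ.child c).V ⊆ oh τ.V := by
  obtain ⟨d, a, b, q⟩ := exists_quad hτ hc
  rw [q.child_V, q.V]
  exact half_oh_subset q.hcd q.c_notMem q.d_notMem (q.ai hτ)

lemma child_body_subset {τ : MTet} (hτ : τ.Valid) {c : Pt3} (hc : c ∈ τ.ref) :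
    (τ.child c).body ⊆ τ.body := by
  obtain ⟨d, a, b, q⟩ := exists_quad hτ hc
  intro x hx
  rw [MTet.body, q.child_V] at hx
  obtain ⟨w, h1, h2, -⟩ := half_hull q.hcd q.c_notMem q.d_notMem (q.ai hτ) hx
  rw [MTet.body, q.V]
  exact mem_hull_iff.2 ⟨w, h1, h2⟩

/-- Distinct children of one tetrahedron have disjoint interiors. -/
lemma child_child_disj {τ : MTet} (hτ : τ.Valid) {c c' : Pt3} (hc : c ∈ τ.ref)
    (hc' : c' ∈ τ.ref) (hne : c ≠ c') {x : Pt3} (hx : x ∈ oh (τ.child c).V)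
    (hx' : x ∈ oh (τ.child c').V) : False := by
  obtain ⟨d, a, b, q⟩ := exists_quad hτ hc
  have : c' = d := by
    rw [q.ref] at hc'
    simp only [Finset.mem_insert, Finset.mem_singleton] at hc'
    exact hc'.resolve_left (Ne.symm hne)
  subst this
  rw [q.child_V] at hx
  rw [q.swap.child_V] at hx'
  exact half_half_disj q.hcd q.c_notMem q.d_notMem (q.ai hτ) hx hx'

/-! ### Laminar meshes -/

/-- A mesh whose edges and marked triangles are pairwise comparable wherever their relative
interiors meet. -/
structure Laminar (M : Set MTet) : Prop where
  mesh : IsMesh M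
  comp : ∀ τ ∈ M, ∀ σ ∈ M, ∀ F ⊆ τ.V, ∀ G ⊆ σ.V, F.card ≤ 3 → G.card ≤ 3 →
    ∀ x ∈ oh F, x ∈ oh G → Comp (node τ F) (node σ G)

lemma body_interior {τ : MTet} (h : τ.Valid) : interior τ.body = oh τ.V := interior_hull h.ai h.1

lemma body_subset_closure {τ : MTet} (h : τ.Valid) : τ.body ⊆ closure (interior τ.body) := by
  have hne : (interior τ.body).Nonempty := by
    rw [body_interior h]
    exact oh_nonempty (Finset.card_pos.1 (by rw [h.1]; norm_num))
  rw [MTet.body] at *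
  rw [(convex_convexHull ℝ _).closure_interior_eq_closure_of_nonempty_interior hne]
  exact subset_closure

lemma oh_notMem_body {M : Set MTet} (hM : IsMesh M) {τ σ : MTet} (hτ : τ ∈ M) (hσ : σ ∈ M)
    (hne : τ ≠ σ) {x : Pt3} (hx : x ∈ oh τ.V) : x ∉ σ.body := by
  intro hxσ
  rw [← body_interior (hM.2.1 τ hτ)] at hx
  obtain ⟨y, h1, h2⟩ := mem_closure_iff.1 (body_subset_closure (hM.2.1 σ hσ) hxσ) _
    isOpen_interior hx
  have := hM.2.2 τ hτ σ hσ hne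
  exact (this ▸ (⟨h1, h2⟩ : y ∈ interior τ.body ∩ interior σ.body) : y ∈ (∅ : Set Pt3))

/-- `τ'` is `τ`, kept, or one of its children. -/
def Par (S : Set MTet) (τ τ' : MTet) : Prop :=
  (τ ∉ S ∧ τ' = τ) ∨ (τ ∈ S ∧ ∃ c ∈ τ.ref, τ' = τ.child c)

lemma exists_par {M S : Set MTet} (hS : S ⊆ M) {τ' : MTet} (h : τ' ∈ bisectTets M S) :
    ∃ τ ∈ M, Par S τ τ' := by
  rcases h with h | h
  · exact ⟨τ', h.1, Or.inl ⟨h.2, rfl⟩⟩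
  · obtain ⟨τ, hτ, c, hc, rfl⟩ := Set.mem_iUnion₂.1 h
    exact ⟨τ, hS hτ, Or.inr ⟨hτ, c, hc, rfl⟩⟩

lemma Par.valid {S : Set MTet} {τ τ' : MTet} (h : Par S τ τ') (hτ : τ.Valid) : τ'.Valid := by
  rcases h with ⟨-, rfl⟩ | ⟨-, c, hc, rfl⟩
  · exact hτ
  · exact child_valid hτ hc

lemma Par.oh_subset {S : Set MTet} {τ τ' : MTet} (h : Par S τ τ') (hτ : τ.Valid) :
    oh τ'.V ⊆ oh τ.V := by
  rcases h with ⟨-, rfl⟩ | ⟨-, c, hc, rfl⟩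
  · exact subset_rfl
  · exact child_oh_subset hτ hc

lemma Par.body_subset {S : Set MTet} {τ τ' : MTet} (h : Par S τ τ') (hτ : τ.Valid) :
    τ'.body ⊆ τ.body := by
  rcases h with ⟨-, rfl⟩ | ⟨-, c, hc, rfl⟩
  · exact subset_rfl
  · exact child_body_subset hτ hc

lemma Par.face {S : Set MTet} {τ τ' : MTet} (h : Par S τ τ') (hτ : τ.Valid) {G : Finset Pt3}
    (hG : G ⊆ τ'.V) (h3 : G.card ≤ 3) :
    (∃ F ⊆ τ.V, F.card ≤ 3 ∧ (node τ' G = node τ F ∨ Split (node τ F) (node τ' G))) ∨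
    (oh G ⊆ oh τ.V ∧ ∃ c d a b, Quad τ c d a b ∧ τ' = τ.child c ∧ G = {mid c d, a, b}) := by
  rcases h with ⟨-, rfl⟩ | ⟨-, c, hc, rfl⟩
  · exact Or.inl ⟨G, hG, h3, Or.inl rfl⟩
  · obtain ⟨d, a, b, q⟩ := exists_quad hτ hc
    rcases child_face hτ q hG h3 with h | rfl
    · exact Or.inl h
    · refine Or.inr ⟨?_, c, d, a, b, q, rfl, rfl⟩
      rw [q.V]
      exact mid_oh_subset q.hcd q.c_notMem q.d_notMem (q.ai hτ)

lemma node_oh_of {τ τ' : MTet} {F G : Finset Pt3}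
    (h : node τ' G = node τ F ∨ Split (node τ F) (node τ' G)) : oh G ⊆ oh F := by
  rcases h with h | h
  · have : G = F := congrArg Prod.fst h
    rw [this]
  · exact h.oh_subset

lemma comp_of {τ τ' : MTet} {F G : Finset Pt3} {g : Node}
    (h : node τ' G = node τ F ∨ Split (node τ F) (node τ' G)) (hc : Comp (node τ F) g)
    {x : Pt3} (hx : x ∈ oh G) (hg : x ∈ oh g.1) : Comp (node τ' G) g := by
  rcases h with h | h
  · rwa [h]
  · exact hc.split h hx hg

lemma bisect_finite {M S : Set MTet} (hM : M.Finite) (hS : S ⊆ M) : (bisectTets M S).Finite := by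
  refine (hM.subset Set.sdiff_subset).union ((hM.subset hS).biUnion fun τ _ => ?_)
  exact (τ.ref.finite_toSet.image τ.child).subset (by
    rintro _ ⟨c, hc, rfl⟩; exact ⟨c, hc, rfl⟩)

/-- The face of a child interior to the parent meets no other face except itself. -/
lemma comp_new {M S : Set MTet} (hM : IsMesh M) {τ σ τ' σ' : MTet} (hτ : τ ∈ M) (hσ : σ ∈ M)
    (hσ' : Par S σ σ') {c d a b : Pt3} (q : Quad τ c d a b)
    (he : τ' = τ.child c) {F G : Finset Pt3} (hF : F = {mid c d, a, b})
    (hFo : oh F ⊆ oh τ.V) (hG : G ⊆ σ'.V) (h3 : G.card ≤ 3)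
    {x : Pt3} (hx : x ∈ oh F) (hxG : x ∈ oh G) : Comp (node τ' F) (node σ' G) := by
  have vτ := hM.2.1 τ hτ
  have vσ := hM.2.1 σ hσ
  have hxτ := hFo hx
  have hxσ : x ∈ σ.body := hσ'.body_subset vσ (hull_mono hG (oh_subset_hull _ hxG))
  have : τ = σ := by
    by_contra hne
    exact oh_notMem_body hM hτ hσ hne hxτ hxσ
  subst this
  rcases hσ'.face vτ hG h3 with ⟨H, hH, hH3, h⟩ | ⟨-, c', d', a', b', q', he', hG'⟩
  · have := oh_face_unique vτ.ai hH subset_rfl (node_oh_of h hxG) hxτ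
    rw [this, vτ.1] at hH3
    omega
  · have hcd : ({c, d} : Finset Pt3) = {c', d'} := by rw [← q.ref, ← q'.ref]
    have hm : mid c' d' = mid c d := by rw [← q.centroid, ← q'.centroid]
    have hab : ({a, b} : Finset Pt3) = {a', b'} := by rw [← q.opp, ← q'.opp]
    have hFG : F = G := by rw [hF, hG', hab, hm]
    have hmark : τ'.mark F = σ'.mark F := by
      have hc' : c' ∈ ({c, d} : Finset Pt3) := by rw [hcd]; simp
      simp only [Finset.mem_insert, Finset.mem_singleton] at hc'
      rcases hc' with rfl | rfl
      · rw [he, he']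
      · rw [he, he', hF]
        exact child_mark_new_eq vτ q
    rw [← hFG]
    have : node τ' F = node σ' F := by simp only [node, hmark]
    rw [this]
    exact Or.inl .refl

/-- Bisecting any tetrahedra of a laminar mesh yields a laminar mesh. -/
lemma Laminar.bisect {M S : Set MTet} (hM : Laminar M) (hS : S ⊆ M) :
    Laminar (bisectTets M S) := by
  refine ⟨⟨bisect_finite hM.mesh.1 hS, ?_, ?_⟩, ?_⟩
  · intro τ' h
    obtain ⟨τ, hτ, hp⟩ := exists_par hS h
    exact hp.valid (hM.mesh.2.1 τ hτ)
  · intro τ' h σ' h' hne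
    obtain ⟨τ, hτ, hp⟩ := exists_par hS h
    obtain ⟨σ, hσ, hp'⟩ := exists_par hS h'
    have vτ := hM.mesh.2.1 τ hτ
    have vσ := hM.mesh.2.1 σ hσ
    by_cases hts : τ = σ
    · subst hts
      rcases hp with ⟨h1, rfl⟩ | ⟨h1, c, hc, rfl⟩ <;> rcases hp' with ⟨h2, rfl⟩ | ⟨h2, c', hc', rfl⟩
      · exact (hne rfl).elim
      · exact (h1 h2).elim
      · exact (h2 h1).elim
      · rw [Set.eq_empty_iff_forall_notMem]
        rintro x ⟨hx, hx'⟩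
        rw [body_interior (child_valid vτ hc)] at hx
        rw [body_interior (child_valid vτ hc')] at hx'
        exact child_child_disj vτ hc hc' (fun h => hne (by rw [h])) hx hx'
    · have := hM.mesh.2.2 τ hτ σ hσ hts
      rw [Set.eq_empty_iff_forall_notMem] at this ⊢
      rintro x ⟨hx, hx'⟩
      exact this x ⟨interior_mono (hp.body_subset vτ) hx, interior_mono (hp'.body_subset vσ) hx'⟩
  · intro τ' h σ' h' F hF G hG hF3 hG3 x hx hxG
    obtain ⟨τ, hτ, hp⟩ := exists_par hS h
    obtain ⟨σ, hσ, hp'⟩ := exists_par hS h'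
    have vτ := hM.mesh.2.1 τ hτ
    have vσ := hM.mesh.2.1 σ hσ
    rcases hp.face vτ hF hF3 with ⟨F₀, hF₀, hF₀3, h1⟩ | ⟨ho, c, d, a, b, q, he, hFe⟩
    · rcases hp'.face vσ hG hG3 with ⟨G₀, hG₀, hG₀3, h2⟩ | ⟨ho, c, d, a, b, q, he, hGe⟩
      · have h0 := hM.comp τ hτ σ hσ F₀ hF₀ G₀ hG₀ hF₀3 hG₀3 x (node_oh_of h1 hx)
          (node_oh_of h2 hxG)
        have h3 : Comp (node τ' F) (node σ G₀) := comp_of h1 h0 hx (node_oh_of h2 hxG)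
        exact (comp_of h2 h3.symm hxG hx).symm
      · exact (comp_new hM.mesh hσ hτ hp q he hGe ho hF hF3 hxG hx).symm
    · exact comp_new hM.mesh hτ hσ hp' q he hFe ho hG hG3 hx hxG

/-- The working form of conformity: common points are spanned by common vertices. -/
def Conf (M : Set MTet) : Prop :=
  ∀ τ ∈ M, ∀ σ ∈ M, τ.body ∩ σ.body ⊆ convexHull ℝ ((τ.V ∩ σ.V : Finset Pt3) : Set Pt3)

lemma conf_of_conforming {M : Set MTet} (h : Conforming M) : Conf M := by
  intro τ hτ σ hσ x hx
  by_cases hne : τ = σ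
  · subst hne; rw [Finset.inter_self]; exact hx.1
  rcases h τ hτ σ hσ hne with h | ⟨v, h1, h2, h⟩ | ⟨e, -, h1, h2, h⟩ | ⟨e, -, h1, h2, h⟩
  · rw [h] at hx; exact hx.elim
  · rw [h] at hx
    rw [Set.mem_singleton_iff.1 hx]
    exact subset_convexHull _ _ (by simp [h1, h2])
  all_goals
    rw [h] at hx
    exact hull_mono (Finset.subset_inter h1 h2) hx

lemma laminar_of_conforminglyMarked {M : Set MTet} (h : ConforminglyMarked M) : Laminar M := by
  refine ⟨h.1, ?_⟩
  intro τ hτ σ hσ F hF G hG hF3 hG3 x hx hxG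
  have vτ := h.1.2.1 τ hτ
  have vσ := h.1.2.1 σ hσ
  have hx' := conf_of_conforming h.2.1 τ hτ σ hσ ⟨hull_mono hF (oh_subset_hull _ hx),
    hull_mono hG (oh_subset_hull _ hxG)⟩
  have hFσ := (oh_face_subset vτ.ai hF Finset.inter_subset_left hx hx').trans
    Finset.inter_subset_right
  have : F = G := oh_face_unique vσ.ai hFσ hG hx hxG
  subst this
  have : node τ F = node σ F := by
    simp only [node]
    split_ifs with h3
    · rw [h.2.2 τ hτ σ hσ F h3 hF hG]
    · rfl
  rw [this]
  exact Or.inl .refl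

lemma noHanging_of_conf {M : Set MTet} (hM : IsMesh M) (h : Conf M) : NoHanging M := by
  rintro τ hτ ⟨σ, hσ, ν, hν, hb, hn⟩
  have h1 := h τ hτ σ hσ ⟨hb, subset_convexHull _ _ hν⟩
  have h2 := oh_face_subset (hM.2.1 σ hσ).ai (F := {ν}) (by simpa using hν)
    Finset.inter_subset_right (self_mem_oh ν) h1
  have h3 := h2 (Finset.mem_singleton_self ν)
  exact hn (Finset.mem_inter.1 h3).1

/-- In a laminar mesh without hanging nodes, a cell descending from a face of `τ` has all its
vertices among those of `τ`. -/
lemma subset_of_desc {M : Set MTet} (hN : NoHanging M) {τ σ : MTet} (hτ : τ ∈ M) (hσ : σ ∈ M)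
    {F G : Finset Pt3} (hF : F ⊆ τ.V) (hG : G ⊆ σ.V) (h : Desc (node τ F) (node σ G)) :
    G ⊆ τ.V := by
  intro ν hν
  by_contra hn
  have h1 : ν ∈ convexHull ℝ (F : Set Pt3) := h.hull hν
  exact hN τ hτ ⟨σ, hσ, ν, hG hν, hull_mono hF h1, hn⟩

lemma Laminar.conf {M : Set MTet} (hM : Laminar M) (hN : NoHanging M) : Conf M := by
  intro τ hτ σ hσ x hx
  have vτ := hM.mesh.2.1 τ hτ
  have vσ := hM.mesh.2.1 σ hσ
  by_cases hne : τ = σ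
  · subst hne; rw [Finset.inter_self]; exact hx.1
  obtain ⟨F, hF, hxF⟩ := exists_carrier hx.1
  obtain ⟨G, hG, hxG⟩ := exists_carrier hx.2
  have card_le : ∀ τ ∈ M, ∀ σ ∈ M, τ ≠ σ → x ∈ σ.body → ∀ F ⊆ τ.V, x ∈ oh F → F.card ≤ 3 := by
    intro τ hτ σ hσ hne hxσ F hF hxF
    by_contra hc
    have : F = τ.V := Finset.eq_of_subset_of_card_le hF (by
      rw [(hM.mesh.2.1 τ hτ).1]; omega)
    exact oh_notMem_body hM.mesh hτ hσ hne (this ▸ hxF) hxσ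
  rcases hM.comp τ hτ σ hσ F hF G hG (card_le τ hτ σ hσ hne hx.2 F hF hxF)
    (card_le σ hσ τ hτ (Ne.symm hne) hx.1 G hG hxG) x hxF hxG with h | h
  · exact hull_mono (Finset.subset_inter (subset_of_desc hN hτ hσ hF hG h) hG)
      (oh_subset_hull _ hxG)
  · exact hull_mono (Finset.subset_inter hF (subset_of_desc hN hσ hτ hG hF h))
      (oh_subset_hull _ hxF)

/-- A laminar mesh without hanging nodes is conformingly marked. -/
lemma Laminar.conforminglyMarked {M : Set MTet} (hM : Laminar M) (hN : NoHanging M) :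
    ConforminglyMarked M := by
  refine ⟨hM.mesh, ?_, ?_⟩
  · intro τ hτ σ hσ hne
    have vτ := hM.mesh.2.1 τ hτ
    have vσ := hM.mesh.2.1 σ hσ
    have heq : τ.body ∩ σ.body = convexHull ℝ ((τ.V ∩ σ.V : Finset Pt3) : Set Pt3) :=
      (hM.conf hN τ hτ σ hσ).antisymm (Set.subset_inter (hull_mono Finset.inter_subset_left)
        (hull_mono Finset.inter_subset_right))
    have hl : τ.V ∩ σ.V ⊆ τ.V := Finset.inter_subset_left
    have hr : τ.V ∩ σ.V ⊆ σ.V := Finset.inter_subset_right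
    have hlt : (τ.V ∩ σ.V).card ≤ 3 := by
      by_contra hc
      have h1 : τ.V ∩ σ.V = τ.V := Finset.eq_of_subset_of_card_le hl (by rw [vτ.1]; omega)
      have h2 : τ.V ∩ σ.V = σ.V := Finset.eq_of_subset_of_card_le hr (by rw [vσ.1]; omega)
      have hV : σ.V = τ.V := h2.symm.trans h1
      obtain ⟨x, hx⟩ := oh_nonempty (F := τ.V) (Finset.card_pos.1 (by rw [vτ.1]; norm_num))
      refine oh_notMem_body hM.mesh hτ hσ hne hx ?_
      rw [MTet.body, hV]; exact oh_subset_hull _ hx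
    rw [heq]
    generalize τ.V ∩ σ.V = C at hl hr hlt
    rcases Nat.lt_or_ge 0 C.card with h0 | h0
    swap
    · left
      rw [Finset.card_eq_zero.1 (Nat.le_zero.1 h0)]; simp
    right
    have h123 : C.card = 1 ∨ C.card = 2 ∨ C.card = 3 := by omega
    rcases h123 with h | h | h
    · obtain ⟨v, rfl⟩ := Finset.card_eq_one.1 h
      left
      exact ⟨v, hl (by simp), hr (by simp), by simp⟩
    · right; left
      exact ⟨C, h, hl, hr, rfl⟩
    · right; right
      exact ⟨C, h, hl, hr, rfl⟩
  · intro τ hτ σ hσ F h3 hF hF'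
    obtain ⟨x, hx⟩ := oh_nonempty (F := F) (Finset.card_pos.1 (by rw [h3]; norm_num))
    have := (hM.comp τ hτ σ hσ F hF F hF' h3.le h3.le x hx hx).eq_of_fst_eq rfl
    simpa [node, h3] using congrArg Prod.snd this

/-! ### Three uniform bisections halve every edge exactly once -/

lemma bary_mid {V : Finset Pt3} {p q : Pt3} (hp : p ∈ V) (hq : q ∈ V) :
    Bary V (fun v => (if v = p then 1 / 2 else 0) + (if v = q then 1 / 2 else 0)) (mid p q) := by
  simp only [Bary, add_smul, Finset.sum_add_distrib, ite_smul, zero_smul, Finset.sum_ite_eq', hp,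
    hq, if_true, hmg_mid, smul_add]

/-- A face containing the midpoint of an edge contains that edge. -/
lemma mid_mem_hull {V C : Finset Pt3} (hV : AI V) (hC : C ⊆ V) {p q : Pt3} (hp : p ∈ V)
    (hq : q ∈ V) (h : mid p q ∈ convexHull ℝ (C : Set Pt3)) : p ∈ C ∧ q ∈ C := by
  obtain ⟨u, hu, -, hu0⟩ := hull_extend hC h
  have key := (bary_mid hp hq).unique hV hu
  constructor
  · by_contra hn
    have := key p hp
    rw [hu0 p hn, if_pos rfl] at this
    split_ifs at this <;> norm_num at this
  · by_contra hn
    have := key q hq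
    rw [hu0 q hn, if_pos rfl] at this
    split_ifs at this <;> norm_num at this

lemma half_aux {τ : MTet} (hτ : τ.Valid) {c d a b : Pt3} (k : Quad τ c d a b) {q : Pt3}
    (hq : q ∈ τ.V) (hb : mid d q ∈ (τ.child c).body) : mid d q ∈ (τ.child c).V := by
  rw [MTet.body, k.child_V] at hb
  obtain ⟨w, h1, -, h3⟩ := half_hull k.hcd k.c_notMem k.d_notMem (k.ai hτ) hb
  rw [k.V] at hq
  have key := (bary_mid (show d ∈ insert c (insert d {a, b}) by simp) hq).unique (k.ai hτ) h1
  have hd := key d (by simp)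
  have hc := key c (by simp)
  by_cases hcq : q = c
  · subst hcq
    rw [k.child_V, mid_comm]; simp
  · rw [← hd, ← hc, if_pos rfl, if_neg k.hcd, if_neg (Ne.symm hcq)] at h3
    split_ifs at h3 <;> norm_num at h3

/-- If the midpoint of an edge of `τ` lies in a child, then it is a vertex of the child, or the
whole edge is an edge of the child. -/
lemma edge_track {τ : MTet} (hτ : τ.Valid) {c : Pt3} (hc : c ∈ τ.ref) {p q : Pt3} (hp : p ∈ τ.V)
    (hq : q ∈ τ.V) (hb : mid p q ∈ (τ.child c).body) :
    mid p q ∈ (τ.child c).V ∨ (p ∈ (τ.child c).V ∧ q ∈ (τ.child c).V) := by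
  obtain ⟨d, a, b, k⟩ := exists_quad hτ hc
  by_cases hpd : p = d
  · subst hpd; exact Or.inl (half_aux hτ k hq hb)
  by_cases hqd : q = d
  · subst hqd; rw [mid_comm] at hb ⊢; exact Or.inl (half_aux hτ k hp hb)
  right
  rw [k.V] at hp hq
  rw [k.child_V]
  simp only [Finset.mem_insert] at hp hq ⊢
  tauto

lemma vertex_track {τ : MTet} (hτ : τ.Valid) {c : Pt3} (hc : c ∈ τ.ref) {p : Pt3} (hp : p ∈ τ.V)
    (hb : p ∈ (τ.child c).body) : p ∈ (τ.child c).V := by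
  have := edge_track hτ hc hp hp (by rwa [mid_self])
  rw [mid_self] at this
  tauto

lemma track_step {τ : MTet} (hτ : τ.Valid) {c : Pt3} (hc : c ∈ τ.ref) {p q : Pt3}
    (h : mid p q ∈ τ.V ∨ (p ∈ τ.V ∧ q ∈ τ.V)) (hb : mid p q ∈ (τ.child c).body) :
    mid p q ∈ (τ.child c).V ∨ (p ∈ (τ.child c).V ∧ q ∈ (τ.child c).V) := by
  rcases h with h | ⟨h1, h2⟩
  · exact Or.inl (vertex_track hτ hc h hb)
  · exact edge_track hτ hc h1 h2 hb

/-- Bisecting an edge of `W` removes a vertex belonging to `W`. -/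
lemma card_step {τ : MTet} (hτ : τ.Valid) {c : Pt3} (hc : c ∈ τ.ref) {W : Finset Pt3} (hW : AI W)
    (hr : τ.ref ⊆ W) : ((τ.child c).V ∩ W).card + 1 ≤ (τ.V ∩ W).card := by
  obtain ⟨d, a, b, k⟩ := exists_quad hτ hc
  have hcW : c ∈ W := hr hc
  have hdW : d ∈ W := hr (by rw [k.ref]; simp)
  have hz := mid_notMem hW hcW hdW k.hcd
  have hd : d ∈ τ.V ∩ W := Finset.mem_inter.2 ⟨by rw [k.V]; simp, hdW⟩
  rw [← Finset.card_erase_add_one hd]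
  refine Nat.succ_le_succ (Finset.card_le_card fun x hx => ?_)
  obtain ⟨h1, h2⟩ := Finset.mem_inter.1 hx
  rw [k.child_V] at h1
  rcases Finset.mem_insert.1 h1 with rfl | h1
  · exact (hz h2).elim
  refine Finset.mem_erase.2 ⟨fun hxd => ?_, Finset.mem_inter.2 ⟨k.inh_subset h1, h2⟩⟩
  rw [hxd] at h1
  rcases Finset.mem_insert.1 h1 with h | h
  · exact k.hcd h.symm
  · exact k.d_notMem h

lemma mids_step {τ : MTet} (hτ : τ.Valid) {c : Pt3} (hc : c ∈ τ.ref) {W : Finset Pt3}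
    (hr : τ.ref ⊆ W) (h : ∀ v ∈ τ.V, ∃ p ∈ W, ∃ q ∈ W, v = mid p q) :
    ∀ v ∈ (τ.child c).V, ∃ p ∈ W, ∃ q ∈ W, v = mid p q := by
  obtain ⟨d, a, b, k⟩ := exists_quad hτ hc
  intro v hv
  rw [k.child_V] at hv
  rcases Finset.mem_insert.1 hv with rfl | hv
  · exact ⟨c, hr hc, d, hr (by rw [k.ref]; simp), rfl⟩
  · exact h v (k.inh_subset hv)

/-- The marks of a child of an unflagged tetrahedron avoid the new vertex. -/
lemma mark_avoid {τ : MTet} (hτ : τ.Valid) (hf : τ.flag = false) {c d a b : Pt3}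
    (k : Quad τ c d a b) (G : Finset Pt3) : mid c d ∉ (τ.child c).mark G := by
  have hz := k.z_notMem hτ
  rw [k.child_mark, hf]
  simp only [Bool.false_eq_true, and_false, if_false]
  split_ifs with h1 h2
  · exact fun h => hz (k.inh_subset ((hτ.2.2.2.2 _ k.inh_subset k.inh_card).1 h))
  · intro h
    exact hz (k.inh_subset (Finset.mem_insert_of_mem h))
  · simp

lemma child_planar {τ : MTet} (hτ : τ.Valid) (hf : τ.flag = false) {c : Pt3} (hc : c ∈ τ.ref) :
    (τ.child c).Planar := by
  obtain ⟨d, a, b, k⟩ := exists_quad hτ hc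
  exact planar_of_avoid (child_valid hτ hc) (v := mid c d) (by rw [k.child_V]; simp)
    fun F _ _ => mark_avoid hτ hf k F

/-- A child of an unflagged tetrahedron, labelled so that `z` is its newest vertex: it is marked
away from `z`. -/
lemma exists_quad_child {τ : MTet} (hτ : τ.Valid) (hf : τ.flag = false) {c c' : Pt3}
    (hc : c ∈ τ.ref) (hc' : c' ∈ (τ.child c).ref) :
    (τ.child c).ref ⊆ τ.V ∧ ∃ d' z r, Quad (τ.child c) c' d' z r ∧ r ∈ τ.V ∧
      (τ.child c).mark {c', z, r} = {c', r} := by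
  obtain ⟨d, a, b, k⟩ := exists_quad hτ hc
  have h1 := child_valid hτ hc
  have hz := k.z_notMem hτ
  have href : (τ.child c).ref ⊆ τ.V := by
    rw [k.child_ref]
    exact ((hτ.2.2.2.2 _ k.inh_subset k.inh_card).1).trans k.inh_subset
  refine ⟨href, ?_⟩
  have key : ∃ d' r, Quad (τ.child c) c' d' (mid c d) r := by
    obtain ⟨d', x, y, k'⟩ := exists_quad h1 hc'
    have hm : mid c d ∈ (τ.child c).V \ (τ.child c).ref := Finset.mem_sdiff.2
      ⟨by rw [k.child_V]; simp, fun h => hz (href h)⟩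
    rw [k'.opp] at hm
    simp only [Finset.mem_insert, Finset.mem_singleton] at hm
    rcases hm with h | h
    · exact ⟨d', y, h ▸ k'⟩
    · exact ⟨d', x, h ▸ k'.swap'⟩
  obtain ⟨d', r, k'⟩ := key
  refine ⟨d', mid c d, r, k', ?_, ?_⟩
  · have hr : r ∈ (τ.child c).V := by rw [k'.V]; simp
    rw [k.child_V] at hr
    rcases Finset.mem_insert.1 hr with h | h
    · exact (k'.hab h.symm).elim
    · exact k.inh_subset h
  · have hs := k'.inh_subset
    rw [Finset.pair_comm] at hs ⊢
    exact mark_pair h1 hs k'.hcb k'.hca k'.hab.symm (mark_avoid hτ hf k _)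

/-- The great-grandchildren of an unflagged tetrahedron are unflagged. -/
lemma flag_three {τ : MTet} (hτ : τ.Valid) (hf : τ.flag = false) {c c' c'' : Pt3}
    (hc : c ∈ τ.ref) (hc' : c' ∈ (τ.child c).ref) :
    (((τ.child c).child c').child c'').flag = false := by
  have h1 := child_valid hτ hc
  have h2 := child_valid h1 hc'
  have hp := child_planar hτ hf hc
  obtain ⟨-, d', z, r, k, -, hm⟩ := exists_quad_child hτ hf hc hc'
  have hgoal : ¬ (((τ.child c).child c').Planar ∧ ((τ.child c).child c').flag = false) := by
    rintro ⟨hp2, hf2⟩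
    by_cases hf1 : (τ.child c).flag = false
    · have : ((τ.child c).child c').flag = true := if_pos ⟨hp, hf1⟩
      rw [this] at hf2
      cases hf2
    · -- in this case the marked edges of the grandchild cover all its vertices
      have hf1 : (τ.child c).flag = true := by simpa using hf1
      obtain ⟨v, hv, h⟩ := planar_avoid h2 hp2
      have m1 := k.child_mark_new h1
      rw [if_pos ⟨hp, hf1⟩, hm, pair_inter k.c_notMem (by simp)] at m1
      have hne : ({mid c' d', c', z} : Finset Pt3) ≠ {mid c' d', z, r} := by
        intro h
        have : c' ∈ ({mid c' d', z, r} : Finset Pt3) := h ▸ by simp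
        simp only [Finset.mem_insert, Finset.mem_singleton] at this
        rcases this with h | h | h
        · exact k.zc h1 h.symm
        · exact k.hca h
        · exact k.hcb h
      have m2 := k.child_mark_of_mem h1 (G := {mid c' d', c', z}) (by simp) hne
      rw [Finset.erase_insert (by simp [k.zc h1, k.za h1])] at m2
      have hA := h {mid c' d', z, r} (by
        rw [k.child_V]; exact Finset.insert_subset_insert _ (Finset.subset_insert _ _))
        (card_triple (k.za h1) (k.zb h1) k.hab)
      have hB := h {mid c' d', c', z} (by
        rw [k.child_V]
        intro x; simp only [Finset.mem_insert, Finset.mem_singleton]; tauto)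
        (card_triple (k.zc h1) (k.za h1) k.hca)
      rw [m1] at hA
      rw [m2] at hB
      rw [k.child_V] at hv
      simp only [Finset.mem_insert, Finset.mem_singleton, not_or] at hA hB hv
      tauto
  exact if_neg hgoal

/-- Every vertex of a great-grandchild of an unflagged tetrahedron `τ` is a vertex of `τ` or the
midpoint of an edge of `τ`, and conversely every such point lying in the great-grandchild is one
of its vertices. -/
lemma three_steps {τ : MTet} (hτ : τ.Valid) (hf : τ.flag = false) {c c' c'' : Pt3}
    (hc : c ∈ τ.ref) (hc' : c' ∈ (τ.child c).ref) (hc'' : c'' ∈ ((τ.child c).child c').ref) :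
    (∀ v ∈ (((τ.child c).child c').child c'').V, ∃ p ∈ τ.V, ∃ q ∈ τ.V, v = mid p q) ∧
    ∀ p ∈ τ.V, ∀ q ∈ τ.V, mid p q ∈ (((τ.child c).child c').child c'').body →
      mid p q ∈ (((τ.child c).child c').child c'').V := by
  have h1 := child_valid hτ hc
  have h2 := child_valid h1 hc'
  obtain ⟨href1, d', z, r, k, hr, hm⟩ := exists_quad_child hτ hf hc hc'
  have href2 : ((τ.child c).child c').ref ⊆ τ.V := by
    rw [k.child_ref, hm]
    exact Finset.insert_subset (href1 hc') (Finset.singleton_subset_iff.2 hr)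
  have href0 : τ.ref ⊆ τ.V := hτ.2.2.1
  refine ⟨mids_step h2 hc'' href2 (mids_step h1 hc' href1 (mids_step hτ hc href0
    fun v hv => ⟨v, hv, v, hv, (mid_self v).symm⟩)), fun p hp q hq hb => ?_⟩
  have hb2 := child_body_subset h2 hc'' hb
  have hb1 := child_body_subset h1 hc' hb2
  rcases track_step h2 hc'' (track_step h1 hc' (track_step hτ hc (Or.inr ⟨hp, hq⟩) hb1) hb2) hb
    with h | ⟨hp3, hq3⟩
  · exact h
  · have e1 := card_step hτ hc hτ.ai href0
    have e2 := card_step h1 hc' hτ.ai href1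
    have e3 := card_step h2 hc'' hτ.ai href2
    rw [Finset.inter_self, hτ.1] at e1
    have hle : ((((τ.child c).child c').child c'').V ∩ τ.V).card ≤ 1 := by omega
    have hpq : p = q := Finset.card_le_one.1 hle p (Finset.mem_inter.2 ⟨hp3, hp⟩) q
      (Finset.mem_inter.2 ⟨hq3, hq⟩)
    rw [← hpq, mid_self]
    exact hp3

/-- Uniform refinement: every tetrahedron is bisected. -/
def uni (M : Set MTet) : Set MTet := bisectTets M M

lemma mem_uni {M : Set MTet} {τ' : MTet} :
    τ' ∈ uni M ↔ ∃ τ ∈ M, ∃ c ∈ τ.ref, τ' = τ.child c := by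
  simp [uni, bisectTets]

lemma Laminar.uni {M : Set MTet} (h : Laminar M) : Laminar (uni M) := h.bisect subset_rfl

/-- A laminar mesh without hanging nodes and without flags. -/
structure Good (M : Set MTet) : Prop where
  lam : Laminar M
  noHang : NoHanging M
  flag : ∀ τ ∈ M, τ.flag = false

lemma mem_uni_three {M : Set MTet} {τ' : MTet} (h : τ' ∈ uni (uni (uni M))) :
    ∃ τ ∈ M, ∃ c ∈ τ.ref, ∃ c' ∈ (τ.child c).ref, ∃ c'' ∈ ((τ.child c).child c').ref,
      τ' = ((τ.child c).child c').child c'' := by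
  obtain ⟨τ2, h2, c'', hc'', rfl⟩ := mem_uni.1 h
  obtain ⟨τ1, h1, c', hc', rfl⟩ := mem_uni.1 h2
  obtain ⟨τ, h0, c, hc, rfl⟩ := mem_uni.1 h1
  exact ⟨τ, h0, c, hc, c', hc', c'', hc'', rfl⟩

lemma Good.three {M : Set MTet} (h : Good M) : Good (uni (uni (uni M))) := by
  refine ⟨h.lam.uni.uni.uni, ?_, ?_⟩
  · rintro τ3 hτ3 ⟨σ3, hσ3, ν, hν, hb, hn⟩
    obtain ⟨τ, hτ, c, hc, c', hc', c'', hc'', rfl⟩ := mem_uni_three hτ3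
    obtain ⟨σ, hσ, e, he, e', he', e'', he'', rfl⟩ := mem_uni_three hσ3
    have vτ := h.lam.mesh.2.1 τ hτ
    have vσ := h.lam.mesh.2.1 σ hσ
    have bτ := child_body_subset vτ hc (child_body_subset (child_valid vτ hc) hc'
      (child_body_subset (child_valid (child_valid vτ hc) hc') hc'' hb))
    have bσ := child_body_subset vσ he (child_body_subset (child_valid vσ he) he'
      (child_body_subset (child_valid (child_valid vσ he) he') he''
        (subset_convexHull ℝ _ (Finset.mem_coe.2 hν))))
    obtain ⟨p, hp, q, hq, rfl⟩ := (three_steps vσ (h.flag σ hσ) he he' he'').1 ν hν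
    obtain ⟨hp', hq'⟩ := mid_mem_hull vσ.ai Finset.inter_subset_left hp hq
      (h.lam.conf h.noHang σ hσ τ hτ ⟨bσ, bτ⟩)
    exact hn ((three_steps vτ (h.flag τ hτ) hc hc' hc'').2 p (Finset.mem_inter.1 hp').2 q
      (Finset.mem_inter.1 hq').2 hb)
  · intro τ3 hτ3
    obtain ⟨τ, hτ, c, hc, c', hc', c'', hc'', rfl⟩ := mem_uni_three hτ3
    exact flag_three (h.lam.mesh.2.1 τ hτ) (h.flag τ hτ) hc hc'

lemma Good.iterate {M : Set MTet} (h : Good M) (K : ℕ) : Good (uni^[3 * K] M) := by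
  induction K with
  | zero => exact h
  | succ K ih =>
    rw [show 3 * (K + 1) = 3 * K + 1 + 1 + 1 by ring]
    simp only [Function.iterate_succ_apply']
    exact ih.three

/-! ### Termination -/

/-- Every tetrahedron of `M` occurs in one of the first `N` uniform refinements of `M₀`. -/
def Bdd (M₀ : Set MTet) (N : ℕ) (M : Set MTet) : Prop := ∀ τ ∈ M, ∃ n ≤ N, τ ∈ uni^[n] M₀

lemma Laminar.iterate {M : Set MTet} (h : Laminar M) (n : ℕ) : Laminar (TetBisect.uni^[n] M) := by
  induction n with
  | zero => exact h
  | succ n ih => rw [Function.iterate_succ_apply']; exact ih.uni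

lemma child_mem_uni {M₀ : Set MTet} {n : ℕ} {τ : MTet} (h : τ ∈ uni^[n] M₀) {c : Pt3}
    (hc : c ∈ τ.ref) : τ.child c ∈ uni^[n + 1] M₀ := by
  rw [Function.iterate_succ_apply']
  exact mem_uni.2 ⟨τ, h, c, hc, rfl⟩

/-- A vertex, once created, is a vertex of all later uniform refinements. -/
lemma vertex_persist {M₀ : Set MTet} (h : Laminar M₀) {m : ℕ} {σ : MTet} (hσ : σ ∈ uni^[m] M₀)
    {ν : Pt3} (hν : ν ∈ σ.V) {N : ℕ} (hN : m ≤ N) : ∃ σ' ∈ uni^[N] M₀, ν ∈ σ'.V := by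
  induction N, hN using Nat.le_induction with
  | base => exact ⟨σ, hσ, hν⟩
  | succ N _ ih =>
    obtain ⟨σ', hσ', hν'⟩ := ih
    have v := (h.iterate N).mesh.2.1 σ' hσ'
    obtain ⟨x, y, hxy, href⟩ := Finset.card_eq_two.1 v.2.2.2.1
    have hx : x ∈ σ'.ref := by rw [href]; simp
    obtain ⟨d, a, b, k⟩ := exists_quad v hx
    rw [k.V] at hν'
    by_cases hd : ν = d
    · have hd' : d ∈ σ'.ref := by rw [k.ref]; simp
      refine ⟨_, child_mem_uni hσ' hd', ?_⟩
      rw [k.swap.child_V, hd]; simp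
    · refine ⟨_, child_mem_uni hσ' hx, ?_⟩
      rw [k.child_V]
      simp only [Finset.mem_insert] at hν' ⊢
      tauto

/-- A tetrahedron with a hanging node is strictly coarser than any bounding uniform refinement
without hanging nodes. -/
lemma hanging_lt {M₀ M : Set MTet} (h : Good M₀) {K : ℕ} (hb : Bdd M₀ (3 * K) M) {τ : MTet}
    (hτ : τ ∈ M) (hh : HasHangingNode M τ) : ∃ n < 3 * K, τ ∈ uni^[n] M₀ := by
  obtain ⟨n, hn, hτn⟩ := hb τ hτ
  refine ⟨n, lt_of_le_of_ne hn ?_, hτn⟩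
  rintro rfl
  obtain ⟨σ, hσ, ν, hν, h1, h2⟩ := hh
  obtain ⟨m, hm, hσm⟩ := hb σ hσ
  obtain ⟨σ', hσ', hν'⟩ := vertex_persist h.lam hσm hν hm
  exact (h.iterate K).noHang τ hτn ⟨σ', hσ', ν, hν', h1, h2⟩

lemma Bdd.step {M₀ M : Set MTet} (h : Good M₀) {K : ℕ} (hb : Bdd M₀ (3 * K) M) :
    Bdd M₀ (3 * K) (conformStep M) := by
  rintro τ' (⟨hτ, -⟩ | hτ)
  · exact hb τ' hτ
  · obtain ⟨τ, ⟨hτM, hh⟩, c, hc, rfl⟩ := Set.mem_iUnion₂.1 hτ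
    obtain ⟨n, hn, hτn⟩ := hanging_lt h hb hτM hh
    exact ⟨n + 1, hn, child_mem_uni hτn hc⟩

lemma Bdd.bisect {M₀ M S : Set MTet} {N : ℕ} (hb : Bdd M₀ N M) (hS : S ⊆ M) :
    Bdd M₀ (N + 1) (bisectTets M S) := by
  rintro τ' (⟨hτ, -⟩ | hτ)
  · obtain ⟨n, hn, h⟩ := hb τ' hτ
    exact ⟨n, by omega, h⟩
  · obtain ⟨τ, hτS, c, hc, rfl⟩ := Set.mem_iUnion₂.1 hτ
    obtain ⟨n, hn, h⟩ := hb τ (hS hτS)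
    exact ⟨n + 1, by omega, child_mem_uni h hc⟩

lemma Laminar.step {M : Set MTet} (h : Laminar M) : Laminar (conformStep M) :=
  h.bisect fun _ hτ => hτ.1

lemma gen_le {M₀ : Set MTet} {g : ℕ} (hg : ∀ τ ∈ M₀, τ.gen ≤ g) (n : ℕ) :
    ∀ τ ∈ uni^[n] M₀, τ.gen ≤ g + n := by
  induction n with
  | zero => exact hg
  | succ n ih =>
    intro τ' h
    rw [Function.iterate_succ_apply'] at h
    obtain ⟨τ, hτ, c, -, rfl⟩ := mem_uni.1 h
    have := ih τ hτ
    change τ.gen + 1 ≤ _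
    omega

/-- Potential of a finite mesh: each tetrahedron weighs `3 ^ (G - gen)`, so that bisecting a
tetrahedron of generation below `G` decreases the total. -/
def pot (G : ℕ) (M : Set MTet) : ℕ := ∑ᶠ τ ∈ M, 3 ^ (G - τ.gen)

lemma sum_biUnion_le (B : Finset MTet) (t : MTet → Finset MTet) (f : MTet → ℕ) :
    ∑ σ ∈ B.biUnion t, f σ ≤ ∑ τ ∈ B, ∑ σ ∈ t τ, f σ := by
  induction B using Finset.induction_on with
  | empty => simp
  | insert x B hx ih =>
    rw [Finset.biUnion_insert, Finset.sum_insert hx]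
    have := Finset.sum_union_inter (s₁ := t x) (s₂ := B.biUnion t) (f := f)
    omega

lemma pot_step {M : Set MTet} (hM : Laminar M) {G : ℕ}
    (hG : ∀ τ ∈ M, HasHangingNode M τ → τ.gen < G) (hn : ¬ NoHanging M) :
    pot G (conformStep M) < pot G M := by
  have hfin := hM.mesh.1
  set S : Set MTet := {τ ∈ M | HasHangingNode M τ} with hS
  have hSM : S ⊆ M := fun _ h => h.1
  have hSfin := hfin.subset hSM
  have hne : S.Nonempty := by
    simp only [NoHanging, not_forall, not_not] at hn
    obtain ⟨τ, hτ, h⟩ := hn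
    exact ⟨τ, hτ, h⟩
  set A := (hfin.subset (Set.sdiff_subset (s := M) (t := S))).toFinset with hA
  set B := hSfin.toFinset with hB
  set C := B.biUnion (fun τ => τ.ref.image τ.child) with hC
  have e1 : pot G M = ∑ τ ∈ A, 3 ^ (G - τ.gen) + ∑ τ ∈ B, 3 ^ (G - τ.gen) := by
    rw [← Finset.sum_union, pot, finsum_mem_eq_finite_toFinset_sum _ hfin]
    · congr 1
      ext τ
      simp only [hA, hB, Set.Finite.mem_toFinset, Finset.mem_union, Set.mem_sdiff]
      have := @hSM τ
      tauto
    · rw [Finset.disjoint_left]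
      intro τ h1 h2
      simp only [hA, hB, Set.Finite.mem_toFinset] at h1 h2
      exact h1.2 h2
  have e2 : pot G (conformStep M) ≤ ∑ τ ∈ A, 3 ^ (G - τ.gen) + ∑ τ ∈ C, 3 ^ (G - τ.gen) := by
    have : conformStep M = ((A ∪ C : Finset MTet) : Set MTet) := by
      ext τ
      simp only [conformStep, bisectTets, ← hS, hA, hC, hB, Finset.coe_union, Finset.coe_biUnion,
        Set.Finite.coe_toFinset, Set.mem_union, Set.mem_iUnion, Finset.coe_image,
        Set.mem_image, Finset.mem_coe, eq_comm, exists_prop, Set.mem_ofPred_eq]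
    rw [this, pot, finsum_mem_coe_finset]
    rw [← Finset.sum_union_inter]
    exact Nat.le_add_right _ _
  have e3 : ∑ τ ∈ C, 3 ^ (G - τ.gen) ≤ ∑ τ ∈ B, 2 * 3 ^ (G - (τ.gen + 1)) := by
    refine (sum_biUnion_le _ _ _).trans (Finset.sum_le_sum fun τ hτ => ?_)
    rw [hB, Set.Finite.mem_toFinset] at hτ
    have hcard : (τ.ref.image τ.child).card ≤ 2 :=
      Finset.card_image_le.trans (hM.mesh.2.1 τ hτ.1).2.2.2.1.le
    calc ∑ σ ∈ τ.ref.image τ.child, 3 ^ (G - σ.gen)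
        = ∑ _σ ∈ τ.ref.image τ.child, 3 ^ (G - (τ.gen + 1)) := by
          refine Finset.sum_congr rfl fun σ hσ => ?_
          obtain ⟨c, -, rfl⟩ := Finset.mem_image.1 hσ
          rfl
      _ ≤ 2 * 3 ^ (G - (τ.gen + 1)) := by
          rw [Finset.sum_const, smul_eq_mul]
          exact Nat.mul_le_mul_right _ hcard
  have e4 : ∑ τ ∈ B, 2 * 3 ^ (G - (τ.gen + 1)) < ∑ τ ∈ B, 3 ^ (G - τ.gen) := by
    refine Finset.sum_lt_sum_of_nonempty ?_ fun τ hτ => ?_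
    · rwa [hB, Set.Finite.toFinset_nonempty]
    · rw [hB, Set.Finite.mem_toFinset] at hτ
      have := hG τ hτ.1 hτ.2
      obtain ⟨k, hk⟩ : ∃ k, G - τ.gen = k + 1 := ⟨G - τ.gen - 1, by omega⟩
      rw [show G - (τ.gen + 1) = k by omega, hk, pow_succ]
      have : 0 < 3 ^ k := by positivity
      omega
  omega

lemma terminates {G : ℕ} (P : Set MTet → Prop) (hlam : ∀ M, P M → Laminar M)
    (hstep : ∀ M, P M → P (conformStep M))
    (hG : ∀ M, P M → ∀ τ ∈ M, HasHangingNode M τ → τ.gen < G) :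
    ∀ n M, P M → pot G M ≤ n → ∃ N, NoHanging (conformStep^[N] M) := by
  intro n
  induction n using Nat.strong_induction_on with
  | _ n ih =>
    intro M hP hle
    by_cases hn : NoHanging M
    · exact ⟨0, hn⟩
    have hlt := pot_step (hlam M hP) (hG M hP) hn
    obtain ⟨N, hN⟩ := ih _ (lt_of_lt_of_le hlt hle) _ (hstep M hP) le_rfl
    exact ⟨N + 1, hN⟩

/-- Restoring conformity terminates for every laminar mesh bounded by a uniform refinement of a
good mesh. -/
lemma exists_noHanging {M₀ M : Set MTet} (h : Good M₀) (hM : Laminar M) {K : ℕ}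
    (hb : Bdd M₀ (3 * K) M) : ∃ N, NoHanging (conformStep^[N] M) := by
  obtain ⟨g, hg⟩ : ∃ g, ∀ τ ∈ M₀, τ.gen ≤ g := by
    obtain ⟨g, hg⟩ := (h.lam.mesh.1.image MTet.gen).bddAbove
    exact ⟨g, fun τ hτ => hg ⟨τ, hτ, rfl⟩⟩
  refine terminates (G := g + 3 * K) (fun M => Laminar M ∧ Bdd M₀ (3 * K) M) (fun M h => h.1)
    (fun M hM => ⟨hM.1.step, hM.2.step h⟩) (fun M hM τ hτ hh => ?_) _ M ⟨hM, hb⟩ le_rfl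
  obtain ⟨n, hn, hτn⟩ := hanging_lt h hM.2 hτ hh
  have := gen_le hg n τ hτn
  omega

lemma invariant_iterate {M₀ M : Set MTet} (h : Good M₀) (hM : Laminar M) {K : ℕ}
    (hb : Bdd M₀ (3 * K) M) (n : ℕ) :
    Laminar (conformStep^[n] M) ∧ Bdd M₀ (3 * K) (conformStep^[n] M) := by
  induction n with
  | zero => exact ⟨hM, hb⟩
  | succ n ih =>
    rw [Function.iterate_succ_apply']
    exact ⟨ih.1.step, ih.2.step h⟩

lemma localRefine_step {M₀ M S : Set MTet} (h : Good M₀) (hM : Laminar M) {N : ℕ}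
    (hb : Bdd M₀ N M) (hS : S ⊆ M) :
    (∃ n, NoHanging (conformStep^[n] (bisectTets M S))) ∧
    Laminar (localRefine M S) ∧ NoHanging (localRefine M S) ∧
    ∃ N', Bdd M₀ N' (localRefine M S) := by
  have hl := hM.bisect hS
  have hb' : Bdd M₀ (3 * (N + 1)) (bisectTets M S) := fun τ hτ => by
    obtain ⟨n, hn, h⟩ := hb.bisect hS τ hτ
    exact ⟨n, by omega, h⟩
  have hex := exists_noHanging h hl hb'
  have he : localRefine M S = conformStep^[Nat.find hex] (bisectTets M S) := by
    rw [localRefine, refineToConformity, dif_pos hex]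
  have hi := invariant_iterate h hl hb' (Nat.find hex)
  refine ⟨hex, ?_⟩
  rw [he]
  exact ⟨hi.1, Nat.find_spec hex, _, hi.2⟩

lemma good_of_conforminglyMarked {M : Set MTet} (h : ConforminglyMarked M)
    (hf : ∀ τ ∈ M, τ.flag = false) : Good M :=
  ⟨laminar_of_conforminglyMarked h, noHanging_of_conf h.1 (conf_of_conforming h.2.1), hf⟩

end TetBisect

/-- Let `T₀` be a conformingly-marked tetrahedral mesh with no flagged
tetrahedron, and let `T_{k+1} = LocalRefine(T_k, S_k)` for arbitrary `S_k ⊆ T_k`.  Then for each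
`k` the recursion `RefineToConformity` applied within `LocalRefine` terminates after finitely
many rounds, and the resulting mesh `T_{k+1}` is a conformingly-marked (in particular,
conforming) mesh. -/
theorem localRefine_terminates_and_is_conformingly_marked
    (T S : ℕ → Set MTet)
    (h0 : ConforminglyMarked (T 0))
    (hflag : ∀ τ ∈ T 0, τ.flag = false)
    (hS : ∀ k, S k ⊆ T k)
    (hT : ∀ k, T (k + 1) = localRefine (T k) (S k)) :
    ∀ k, (∃ N, NoHanging (conformStep^[N] (bisectTets (T k) (S k)))) ∧
      ConforminglyMarked (T (k + 1)) := by
  have hgood := TetBisect.good_of_conforminglyMarked h0 hflag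
  -- the invariant carried along the sequence of meshes
  have hinv : ∀ k, TetBisect.Laminar (T k) ∧ ∃ N, TetBisect.Bdd (T 0) N (T k) := by
    intro k
    induction k with
    | zero => exact ⟨hgood.lam, 0, fun τ hτ => ⟨0, le_rfl, hτ⟩⟩
    | succ k ih =>
      obtain ⟨hl, N, hb⟩ := ih
      obtain ⟨-, hl', -, hb'⟩ := TetBisect.localRefine_step hgood hl hb (hS k)
      rw [hT k]
      exact ⟨hl', hb'⟩
  intro k
  obtain ⟨hl, N, hb⟩ := hinv k
  obtain ⟨hex, hl', hn, -⟩ := TetBisect.localRefine_step hgood hl hb (hS k)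
  rw [hT k]
  exact ⟨hex, hl'.conforminglyMarked hn⟩
end
end
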